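/- arXiv:math/0607194 — 5 statements merged into one kernel-verified Lean document; each statement's English description precedes it below -/
import Mathlib

section
/- Let r, c ∈ ℤ³ be vectors of positive integers with r₁+r₂+r₃ = c₁+c₂+c₃, and suppose (r,c) ≠ ((1,1,1),(1,1,1)) (i.e., the transportation polytope T_{rc} is not the Birkhoff polytope B₃). Let L be the (finite) set of all 3×3 matrices with nonnegative integer entries whose i-th row sum is r_i and j-th column sum is c_j. Let k be a field and let φ : k[x_A : A ∈ L] → k[t₀, t_{ij} : 1 ≤ i,j ≤ 3] be the k-algebra homomorphism sending x_A to t₀ · ∏_{i,j} t_{ij}^{A_{ij}}. Then the toric ideal ker φ is generated by its elements of total degree at most 2. -/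
open MvPolynomial

/-!
The kernel of a monomial map is spanned by differences of monomials, so it suffices to connect
any two multisets of tables with the same size and the same sum by exchanges `A + B = C + D` of two
tables for two others.

A multiset whose entries have the least sum of squares in its class is balanced: in every position
its entries differ by at most one. Otherwise some `A + B` could be halved more evenly, because an
integral matrix with zero margins, such as `A - B`, is congruent modulo `2` to one with entries in
`{-1, 0, 1}`: a shortest matrix `D` in its class has `D i j - D i j' - D i' j + D i' j' ≤ 4`, since
otherwise subtracting twice the corresponding rectangle would shorten it, and the sum of this over
the four proper rectangles with a corner at `(i, j)` is `9 * D i j ≤ 16`.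

Two balanced multisets with the same size and sum have the same entries in each position and lie in
one unit cell `m ≤ A ≤ m + 1`. The zero-one tables `A - m` either contain one that is determined
by a single entry, and the multisets then share a table, or have all margins `1` or all margins
`2`, so that they are permutation matrices or complements of such. In the latter case, if no table
is shared, some `A` in one multiset satisfies `A ≤ B + B'` with `B ≠ B'` in the other; this needs
`m ≠ 0` if the margins are `1`, which only fails for the Birkhoff polytope. Exchanging `B`, `B'`
for `A`, `B + B' - A` makes the multisets share `A`, and induction on their size finishes.
-/

section QuadraticEquivalence

variable {σ E : Type*} [AddCommMonoid E] {d : σ → E} {M N : Multiset σ}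

/-- The equivalence of multisets generated by exchanging two elements `a`, `b` for two elements
`a'`, `b'` with `d a + d b = d a' + d b'`. For exponent vectors `d` these are the moves given by
the quadratic binomials of the toric ideal. -/
inductive QuadEquiv (d : σ → E) : Multiset σ → Multiset σ → Prop
  | exchange {a b a' b' : σ} (h : d a + d b = d a' + d b') (M : Multiset σ) :
      QuadEquiv d (a ::ₘ b ::ₘ M) (a' ::ₘ b' ::ₘ M)
  | refl (M : Multiset σ) : QuadEquiv d M M
  | symm {M N : Multiset σ} : QuadEquiv d M N → QuadEquiv d N M
  | trans {M N P : Multiset σ} : QuadEquiv d M N → QuadEquiv d N P → QuadEquiv d M P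

namespace QuadEquiv

theorem cons (a : σ) (h : QuadEquiv d M N) : QuadEquiv d (a ::ₘ M) (a ::ₘ N) := by
  induction h with
  | @exchange b c b' c' h M =>
    have rotate (x y : σ) : a ::ₘ x ::ₘ y ::ₘ M = x ::ₘ y ::ₘ a ::ₘ M := by
      rw [Multiset.cons_swap a x, Multiset.cons_swap a y]
    rw [rotate, rotate]
    exact exchange h _
  | refl M => exact refl _
  | symm _ ih => exact ih.symm
  | trans _ _ ihM ihN => exact ihM.trans ihN

theorem card_eq (h : QuadEquiv d M N) : M.card = N.card := by
  induction h with
  | exchange _ M => simp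
  | refl M => rfl
  | symm _ ih => exact ih.symm
  | trans _ _ ihM ihN => exact ihM.trans ihN

theorem sum_map_eq (h : QuadEquiv d M N) : (M.map d).sum = (N.map d).sum := by
  induction h with
  | exchange h M => simp only [Multiset.map_cons, Multiset.sum_cons, ← add_assoc, h]
  | refl M => rfl
  | symm _ ih => exact ih.symm
  | trans _ _ ihM ihN => exact ihM.trans ihN

theorem prod_X_sub_prod_X_mem {k : Type*} [CommRing k] {I : Ideal (MvPolynomial σ k)}
    (hI : ∀ a b a' b', d a + d b = d a' + d b' → X a * X b - X a' * X b' ∈ I)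
    (h : QuadEquiv d M N) : (M.map X).prod - (N.map X).prod ∈ I := by
  induction h with
  | @exchange a b a' b' h M =>
    have := I.mul_mem_right (M.map X).prod (hI a b a' b' h)
    simpa only [Multiset.map_cons, Multiset.prod_cons, sub_mul, mul_assoc] using this
  | refl M => simp
  | symm _ ih => exact sub_mem_comm_iff.mp ih
  | trans _ _ ihM ihN => simpa using I.add_mem ihM ihN

end QuadEquiv

theorem exists_eq_cons_cons_of_mem {α : Type*} {s : Multiset α} {a b : α} (ha : a ∈ s)
    (hb : b ∈ s) (hab : a ≠ b) : ∃ t, s = a ::ₘ b ::ₘ t := by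
  obtain ⟨t, rfl⟩ := Multiset.exists_cons_of_mem ha
  obtain ⟨t, rfl⟩ :=
    Multiset.exists_cons_of_mem ((Multiset.mem_cons.mp hb).resolve_left hab.symm)
  exact ⟨t, rfl⟩

end QuadraticEquivalence

section MonomialMaps

variable {σ τ k : Type*} [CommRing k] {e : σ → τ →₀ ℕ}
  {φ : MvPolynomial σ k →ₐ[k] MvPolynomial τ k}

theorem monomial_one_eq_prod_X (u : σ →₀ ℕ) :
    monomial u (1 : k) = ((Finsupp.toMultiset u).map X).prod := by
  rw [Finsupp.toMultiset_map, Finsupp.prod_toMultiset,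
    Finsupp.prod_mapDomain_index (by simp) (fun _ _ _ => pow_add _ _ _), monomial_eq, C_1, one_mul]

theorem map_prod_X (hφ : ∀ a, φ (X a) = monomial (e a) 1) (M : Multiset σ) :
    φ (M.map X).prod = monomial (M.map e).sum 1 := by
  induction M using Multiset.induction_on with
  | empty => simp
  | cons a M ih => simp [hφ, ih, monomial_mul]

theorem ker_le_of_prod_X_sub_prod_X_mem (hφ : ∀ a, φ (X a) = monomial (e a) 1)
    {I : Ideal (MvPolynomial σ k)}
    (hI : ∀ M N : Multiset σ, (M.map e).sum = (N.map e).sum →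
      (M.map X).prod - (N.map X).prod ∈ I) :
    RingHom.ker φ ≤ I := by
  let exponent : Multiset σ → τ →₀ ℕ := fun M => (M.map e).sum
  let cls : Multiset σ → MvPolynomial σ k ⧸ I := fun M => Ideal.Quotient.mk I (M.map X).prod
  have cls_factors : cls.FactorsThrough exponent := fun M N h =>
    Ideal.Quotient.eq.mpr (hI M N h)
  let ψ : MvPolynomial τ k →ₗ[k] MvPolynomial σ k ⧸ I :=
    (basisMonomials τ k).constr k (Function.extend exponent cls 0)
  have ψ_monomial (M : Multiset σ) : ψ (monomial (exponent M) 1) = cls M := by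
    have h := (basisMonomials τ k).constr_basis k (Function.extend exponent cls 0) (exponent M)
    rwa [coe_basisMonomials, cls_factors.extend_apply] at h
  have ψ_comp : ψ ∘ₗ φ.toLinearMap = (Ideal.Quotient.mkₐ k I).toLinearMap := by
    refine (basisMonomials σ k).ext fun u => ?_
    simp only [coe_basisMonomials, LinearMap.comp_apply, AlgHom.toLinearMap_apply]
    rw [monomial_one_eq_prod_X, map_prod_X hφ]
    exact ψ_monomial _
  intro f hf
  rw [RingHom.mem_ker] at hf
  have := LinearMap.congr_fun ψ_comp f
  rw [LinearMap.comp_apply, AlgHom.toLinearMap_apply, hf, map_zero] at this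
  exact Ideal.Quotient.eq_zero_iff_mem.mp this.symm

theorem totalDegree_X_mul_X_sub_le (a b a' b' : σ) :
    (X a * X b - X a' * X b' : MvPolynomial σ k).totalDegree ≤ 2 := by
  have degree_X_mul_X (a b : σ) : (X a * X b : MvPolynomial σ k).totalDegree ≤ 2 := by
    rw [X, X, monomial_mul]
    refine (totalDegree_monomial_le _ _).trans ?_
    rw [Finsupp.sum_add_index'] <;> simp
  exact (totalDegree_sub _ _).trans (max_le (degree_X_mul_X a b) (degree_X_mul_X a' b'))

theorem ker_eq_span_totalDegree_le_two {E : Type*} [AddCommMonoid E] {d : σ → E}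
    (hφ : ∀ a, φ (X a) = monomial (e a) 1)
    (hd : ∀ a b a' b', d a + d b = d a' + d b' → e a + e b = e a' + e b')
    (hconn : ∀ M N : Multiset σ, (M.map e).sum = (N.map e).sum → QuadEquiv d M N) :
    RingHom.ker φ = Ideal.span {f | f ∈ RingHom.ker φ ∧ f.totalDegree ≤ 2} := by
  refine le_antisymm (ker_le_of_prod_X_sub_prod_X_mem hφ fun M N h => ?_)
    (Ideal.span_le.mpr fun f hf => hf.1)
  refine (hconn M N h).prod_X_sub_prod_X_mem fun a b a' b' h =>
    Ideal.subset_span ⟨?_, totalDegree_X_mul_X_sub_le a b a' b'⟩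
  simp [RingHom.mem_ker, hφ, monomial_mul, hd a b a' b' h]

end MonomialMaps

section Rounding

variable {ι κ : Type*} [Fintype ι] [Fintype κ]

/-- An integral matrix with all row and column sums zero, i.e. a circulation on the complete
bipartite graph; differences of contingency tables are of this kind. -/
def IsCirculation (D : Matrix ι κ ℤ) : Prop :=
  (∀ i, ∑ j, D i j = 0) ∧ ∀ j, ∑ i, D i j = 0

/-- The alternating sum of `D` over the corners of the rectangle with rows `i`, `i'` and columns
`j`, `j'`, which measures how far subtracting that rectangle shortens `D`. -/
def crossDiff (D : Matrix ι κ ℤ) (i i' : ι) (j j' : κ) : ℤ :=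
  D i j - D i j' - D i' j + D i' j'

theorem IsCirculation.sum_crossDiff {D : Matrix ι κ ℤ} (hD : IsCirculation D) (i : ι) (j : κ) :
    ∑ i', ∑ j', crossDiff D i i' j j' = Fintype.card ι * Fintype.card κ * D i j := by
  simp only [crossDiff, Finset.sum_add_distrib, Finset.sum_sub_distrib, Finset.sum_const,
    ← Finset.mul_sum, Finset.card_univ, nsmul_eq_mul, hD.1, hD.2]
  ring

-- `hcard` says that the matrix is `3 × 3`, or nonempty with a side of length at most `2`.
theorem IsCirculation.le_one_of_crossDiff_le_four
    (hcard : 2 * ((Fintype.card ι - 1) * (Fintype.card κ - 1)) < Fintype.card ι * Fintype.card κ)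
    {D : Matrix ι κ ℤ} (hD : IsCirculation D) (h : ∀ i i' j j', crossDiff D i i' j j' ≤ 4)
    (i : ι) (j : κ) : D i j ≤ 1 := by
  classical
  have bound : (Fintype.card ι * Fintype.card κ * D i j : ℤ) ≤
      ((Fintype.card ι - 1) * ((Fintype.card κ - 1) * 4) : ℕ) :=
    calc (Fintype.card ι * Fintype.card κ * D i j : ℤ)
        = ∑ i' ∈ Finset.univ.erase i, ∑ j', crossDiff D i i' j j' := by
          rw [← hD.sum_crossDiff, Finset.sum_erase]
          simp [crossDiff]
      _ = ∑ i' ∈ Finset.univ.erase i, ∑ j' ∈ Finset.univ.erase j, crossDiff D i i' j j' := by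
          refine Finset.sum_congr rfl fun i' _ => (Finset.sum_erase _ ?_).symm
          simp [crossDiff]
      _ ≤ ∑ i' ∈ Finset.univ.erase i, ∑ j' ∈ Finset.univ.erase j, 4 :=
          Finset.sum_le_sum fun i' _ => Finset.sum_le_sum fun j' _ => h i i' j j'
      _ = ((Fintype.card ι - 1) * ((Fintype.card κ - 1) * 4) : ℕ) := by simp
  by_contra! hlt
  zify at hcard
  push_cast at bound
  have := mul_le_mul_of_nonneg_left (show 2 ≤ D i j by omega)
    (show (0 : ℤ) ≤ Fintype.card ι * Fintype.card κ by positivity)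
  linarith

section Rectangle

variable [DecidableEq ι] [DecidableEq κ]

/-- The elementary circulation with entry `1` at `(i, j)`, `(i', j')` and `-1` at `(i, j')`,
`(i', j)`; it vanishes when `i = i'` or `j = j'`. -/
def rectangle (i i' : ι) (j j' : κ) : Matrix ι κ ℤ :=
  Matrix.vecMulVec (Pi.single i 1 - Pi.single i' 1) (Pi.single j 1 - Pi.single j' 1)

theorem isCirculation_rectangle (i i' : ι) (j j' : κ) :
    IsCirculation (rectangle i i' j j') := by
  simp [IsCirculation, rectangle, Matrix.vecMulVec_apply, ← Finset.mul_sum, ← Finset.sum_mul]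

theorem sum_mul_rectangle (D : Matrix ι κ ℤ) (i i' : ι) (j j' : κ) :
    ∑ p, ∑ q, D p q * rectangle i i' j j' p q = crossDiff D i i' j j' := by
  simp only [rectangle, Matrix.vecMulVec_apply, Pi.sub_apply, Pi.single_apply, mul_sub, mul_ite,
    mul_one, mul_zero, Finset.sum_sub_distrib, Finset.sum_ite_eq', Finset.mem_univ, ↓reduceIte,
    crossDiff]
  ring

theorem sum_rectangle_sq {i i' : ι} {j j' : κ} (hi : i ≠ i') (hj : j ≠ j') :
    ∑ p, ∑ q, rectangle i i' j j' p q ^ 2 = 4 := by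
  simp only [sq, sum_mul_rectangle]
  simp [crossDiff, rectangle, Matrix.vecMulVec_apply, hi, hj, hi.symm, hj.symm]

theorem sum_sub_two_rectangle_sq (D : Matrix ι κ ℤ) {i i' : ι} {j j' : κ} (hi : i ≠ i')
    (hj : j ≠ j') :
    ∑ p, ∑ q, (D p q - 2 * rectangle i i' j j' p q) ^ 2 =
      ∑ p, ∑ q, D p q ^ 2 - 4 * (crossDiff D i i' j j' - 4) := by
  have expand (p q) : (D p q - 2 * rectangle i i' j j' p q) ^ 2 =
      D p q ^ 2 - 4 * (D p q * rectangle i i' j j' p q) + 4 * rectangle i i' j j' p q ^ 2 := by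
    ring
  simp only [expand, Finset.sum_add_distrib, Finset.sum_sub_distrib, ← Finset.mul_sum,
    sum_mul_rectangle, sum_rectangle_sq hi hj]
  ring

theorem IsCirculation.sub_two_smul_rectangle {D : Matrix ι κ ℤ} (hD : IsCirculation D)
    (i i' : ι) (j j' : κ) : IsCirculation (D - 2 • rectangle i i' j j') := by
  obtain ⟨hrow, hcol⟩ := isCirculation_rectangle i i' j j'
  simp [IsCirculation, hD.1, hD.2, ← Finset.mul_sum, hrow, hcol]

end Rectangle

theorem IsCirculation.exists_even_sub_abs_le_one
    (hcard : 2 * ((Fintype.card ι - 1) * (Fintype.card κ - 1)) < Fintype.card ι * Fintype.card κ)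
    {D : Matrix ι κ ℤ} (hD : IsCirculation D) :
    ∃ F, IsCirculation F ∧ (∀ i j, Even (D i j - F i j)) ∧ ∀ i j, |F i j| ≤ 1 := by
  classical
  obtain ⟨F, ⟨hF, hDF⟩, hmin⟩ := exists_minimalFor_of_wellFoundedLT
    (fun F => IsCirculation F ∧ ∀ i j, Even (D i j - F i j))
    (fun F => (∑ i, ∑ j, F i j ^ 2).toNat) ⟨D, hD, by simp⟩
  have cross_le (i i' j j') : crossDiff F i i' j j' ≤ 4 := by
    by_contra! hlt
    have hi : i ≠ i' := by rintro rfl; simp [crossDiff] at hlt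
    have hj : j ≠ j' := by rintro rfl; simp [crossDiff] at hlt
    have even_sub (p q) : Even (D p q - (F - 2 • rectangle i i' j j') p q) := by
      simpa [sub_sub_eq_add_sub, add_sub_right_comm] using (hDF p q).add (even_two_mul _)
    have decrease := sum_sub_two_rectangle_sq F hi hj
    have nonneg : 0 ≤ ∑ p, ∑ q, (F p q - 2 * rectangle i i' j j' p q) ^ 2 := by positivity
    have := hmin ⟨hF.sub_two_smul_rectangle i i' j j', even_sub⟩
    simp only [Matrix.sub_apply, Matrix.smul_apply, nsmul_eq_mul, Nat.cast_ofNat] at this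
    omega
  have neg_circ : IsCirculation (-F) := by simp [IsCirculation, hF.1, hF.2]
  have neg_cross_le (i i' j j') : crossDiff (-F) i i' j j' ≤ 4 := by
    convert cross_le i i' j' j using 1
    simp only [crossDiff, Matrix.neg_apply]
    ring
  refine ⟨F, hF, hDF, fun i j => abs_le.mpr ⟨?_, hF.le_one_of_crossDiff_le_four hcard cross_le i j⟩⟩
  exact neg_le.mp (neg_circ.le_one_of_crossDiff_le_four hcard neg_cross_le i j)

end Rounding

section Multisets

/-- A multiset of natural numbers any two of which differ by at most one, as do the entries at a
given position in a multiset of tables that exchanges cannot even out further. -/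
def IsBalanced (s : Multiset ℕ) : Prop :=
  ∀ x ∈ s, ∀ y ∈ s, x ≤ y + 1

theorem IsBalanced.average_le {s : Multiset ℕ} (hs : IsBalanced s) {x : ℕ} (hx : x ∈ s) :
    s.sum / s.card ≤ x := by
  by_contra! hlt
  have sum_lt : s.sum < s.card * (s.sum / s.card) := by
    have := Multiset.sum_lt_sum (s := s) (f := id) (g := fun _ => s.sum / s.card)
      (fun y hy => (hs y hy x hx).trans hlt) ⟨x, hx, hlt⟩
    simpa using this
  exact sum_lt.not_ge (Nat.mul_div_le _ _)

theorem IsBalanced.le_average_add_one {s : Multiset ℕ} (hs : IsBalanced s) {x : ℕ} (hx : x ∈ s) :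
    x ≤ s.sum / s.card + 1 := by
  by_contra! hlt
  have le_sum : s.card * (s.sum / s.card + 1) ≤ s.sum := by
    have := Multiset.card_nsmul_le_sum (s := s) (a := s.sum / s.card + 1)
      fun y hy => by have := hs x hx y hy; omega
    simpa using this
  exact le_sum.not_gt (Nat.lt_mul_div_succ _ (Multiset.card_pos_iff_exists_mem.mpr ⟨x, hx⟩))

theorem exists_eq_replicate_add_replicate {q : ℕ} {s : Multiset ℕ}
    (hs : ∀ x ∈ s, q ≤ x ∧ x ≤ q + 1) :
    ∃ a b, s = Multiset.replicate a q + Multiset.replicate b (q + 1) := by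
  induction s using Multiset.induction_on with
  | empty => exact ⟨0, 0, rfl⟩
  | cons x s ih =>
    obtain ⟨a, b, rfl⟩ := ih fun y hy => hs y (Multiset.mem_cons_of_mem hy)
    obtain ⟨hqx, hxq⟩ := hs x (Multiset.mem_cons_self _ _)
    obtain rfl | rfl : x = q ∨ x = q + 1 := by omega
    · exact ⟨a + 1, b, by simp⟩
    · exact ⟨a, b + 1, by simp⟩

theorem IsBalanced.eq_of_card_eq_of_sum_eq {s t : Multiset ℕ} (hs : IsBalanced s)
    (ht : IsBalanced t) (hcard : s.card = t.card) (hsum : s.sum = t.sum) : s = t := by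
  obtain ⟨a, b, hab⟩ := exists_eq_replicate_add_replicate fun x hx =>
    ⟨hs.average_le hx, hs.le_average_add_one hx⟩
  obtain ⟨a', b', hab'⟩ := exists_eq_replicate_add_replicate fun x hx =>
    ⟨ht.average_le hx, ht.le_average_add_one hx⟩
  rw [← hsum, ← hcard] at hab'
  generalize s.sum / s.card = q at hab hab'
  subst hab hab'
  simp only [Multiset.card_add, Multiset.card_replicate, Multiset.sum_add, Multiset.sum_replicate,
    smul_eq_mul, mul_add, mul_one, ← add_assoc, ← add_mul] at hcard hsum
  rw [hcard] at hsum
  obtain rfl : b = b' := by omega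
  obtain rfl : a = a' := by omega
  rfl

end Multisets

section ContingencyTables

variable {ι κ : Type*} [Fintype ι] [Fintype κ] {r : ι → ℤ} {c : κ → ℤ}

/-- The lattice points of the transportation polytope `T_{rc}`: the matrices of natural numbers
with row sums `r` and column sums `c`. -/
def contingencyTables (r : ι → ℤ) (c : κ → ℤ) : Set (Matrix ι κ ℕ) :=
  {A | (∀ i, ∑ j, (A i j : ℤ) = r i) ∧ ∀ j, ∑ i, (A i j : ℤ) = c j}

theorem mem_contingencyTables_of_add_eq_add {A B C D : Matrix ι κ ℕ}
    (hA : A ∈ contingencyTables r c) (hB : B ∈ contingencyTables r c)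
    (hC : C ∈ contingencyTables r c) (h : C + D = A + B) : D ∈ contingencyTables r c := by
  have entry (i j) : (D i j : ℤ) = A i j + B i j - C i j := by
    have := congrFun₂ h i j
    simp only [Matrix.add_apply] at this
    omega
  refine ⟨fun i => ?_, fun j => ?_⟩
  · simp [entry, Finset.sum_add_distrib, hA.1, hB.1, hC.1]
  · simp [entry, Finset.sum_add_distrib, hA.2, hB.2, hC.2]

theorem exists_quadEquiv_cons {A B B' : contingencyTables r c}
    {N : Multiset (contingencyTables r c)} (hB : B ∈ N) (hB' : B' ∈ N) (hne : B ≠ B')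
    (hle : ∀ i j, A.1 i j ≤ B.1 i j + B'.1 i j) :
    ∃ N', QuadEquiv Subtype.val N (A ::ₘ N') := by
  obtain ⟨P, rfl⟩ := exists_eq_cons_cons_of_mem hB hB' hne
  have add_sub : A.1 + (B.1 + B'.1 - A.1) = B.1 + B'.1 := by
    ext i j
    exact Nat.add_sub_of_le (hle i j)
  exact ⟨⟨_, mem_contingencyTables_of_add_eq_add B.2 B'.2 A.2 add_sub⟩ ::ₘ P,
    .exchange add_sub.symm P⟩

theorem exists_nat_half_sum {a b : ℕ} {f : ℤ} (heven : Even ((a - b : ℤ) - f)) (hf : |f| ≤ 1) :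
    ∃ x y : ℕ, x + y = a + b ∧ (2 * x : ℤ) = a + b + f ∧ x ≤ y + 1 ∧ y ≤ x + 1 := by
  obtain ⟨q, hq⟩ := heven
  obtain ⟨hf_lower, hf_upper⟩ := abs_le.mp hf
  exact ⟨(a - q).toNat, (b + q).toNat, by omega⟩

theorem exists_near_halves
    (hcard : 2 * ((Fintype.card ι - 1) * (Fintype.card κ - 1)) < Fintype.card ι * Fintype.card κ)
    (A B : contingencyTables r c) :
    ∃ C D : contingencyTables r c, C.1 + D.1 = A.1 + B.1 ∧
      ∀ i j, C.1 i j ≤ D.1 i j + 1 ∧ D.1 i j ≤ C.1 i j + 1 := by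
  have difference : IsCirculation fun i j => (A.1 i j - B.1 i j : ℤ) := by
    simp [IsCirculation, A.2.1, A.2.2, B.2.1, B.2.2]
  obtain ⟨F, hF, heven, habs⟩ := difference.exists_even_sub_abs_le_one hcard
  choose C D hadd hC hclose using fun i j => exists_nat_half_sum (heven i j) (habs i j)
  have hadd : Matrix.of C + Matrix.of D = A.1 + B.1 := by ext i j; exact hadd i j
  have hCmem : Matrix.of C ∈ contingencyTables r c := by
    refine ⟨fun i => ?_, fun j => ?_⟩ <;> refine mul_left_cancel₀ two_ne_zero ?_
    · simp [Finset.mul_sum, hC, Finset.sum_add_distrib, A.2.1, B.2.1, hF.1, two_mul]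
    · simp [Finset.mul_sum, hC, Finset.sum_add_distrib, A.2.2, B.2.2, hF.2, two_mul]
  exact ⟨⟨_, hCmem⟩, ⟨_, mem_contingencyTables_of_add_eq_add A.2 B.2 hCmem hadd⟩, hadd, hclose⟩

theorem sq_add_sq_le_of_near {a b c d : ℕ} (h : c + d = a + b) (hcd : c ≤ d + 1)
    (hdc : d ≤ c + 1) : c ^ 2 + d ^ 2 ≤ a ^ 2 + b ^ 2 := by
  zify at *
  have := sq_le_sq.mpr (show |(c - d : ℤ)| ≤ |(a - b : ℤ)| by grind)
  have := congrArg (· ^ 2) h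
  grind

theorem sq_add_sq_lt_of_near {a b c d : ℕ} (h : c + d = a + b) (hcd : c ≤ d + 1)
    (hdc : d ≤ c + 1) (hba : b + 1 < a) : c ^ 2 + d ^ 2 < a ^ 2 + b ^ 2 := by
  zify at *
  have := sq_lt_sq.mpr (show |(c - d : ℤ)| < |(a - b : ℤ)| by grind)
  have := congrArg (· ^ 2) h
  grind

theorem sum_sq_add_sum_sq_lt {A B C D : Matrix ι κ ℕ} (h : C + D = A + B)
    (hnear : ∀ i j, C i j ≤ D i j + 1 ∧ D i j ≤ C i j + 1) {i : ι} {j : κ}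
    (hij : B i j + 1 < A i j) :
    ∑ i, ∑ j, C i j ^ 2 + ∑ i, ∑ j, D i j ^ 2 < ∑ i, ∑ j, A i j ^ 2 + ∑ i, ∑ j, B i j ^ 2 := by
  have entry_le (i j) : C i j ^ 2 + D i j ^ 2 ≤ A i j ^ 2 + B i j ^ 2 :=
    sq_add_sq_le_of_near (congrFun₂ h i j) (hnear i j).1 (hnear i j).2
  have entry_lt : C i j ^ 2 + D i j ^ 2 < A i j ^ 2 + B i j ^ 2 :=
    sq_add_sq_lt_of_near (congrFun₂ h i j) (hnear i j).1 (hnear i j).2 hij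
  simp only [← Finset.sum_add_distrib]
  exact Finset.sum_lt_sum (fun p _ => Finset.sum_le_sum fun q _ => entry_le p q)
    ⟨i, Finset.mem_univ i,
      Finset.sum_lt_sum (fun q _ => entry_le i q) ⟨j, Finset.mem_univ j, entry_lt⟩⟩

theorem exists_quadEquiv_isBalanced
    (hcard : 2 * ((Fintype.card ι - 1) * (Fintype.card κ - 1)) < Fintype.card ι * Fintype.card κ)
    (M : Multiset (contingencyTables r c)) :
    ∃ M', QuadEquiv Subtype.val M M' ∧ ∀ i j, IsBalanced (M'.map fun A => A.1 i j) := by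
  obtain ⟨M', hM', hmin⟩ := exists_minimalFor_of_wellFoundedLT
    (QuadEquiv Subtype.val M) (fun N => (N.map fun A => ∑ i, ∑ j, A.1 i j ^ 2).sum) ⟨M, .refl M⟩
  refine ⟨M', hM', fun i j => Multiset.forall_mem_map_iff.mpr fun A hA =>
    Multiset.forall_mem_map_iff.mpr fun B hB => ?_⟩
  by_contra! hlt
  obtain ⟨P, rfl⟩ := exists_eq_cons_cons_of_mem hA hB (by rintro rfl; omega)
  obtain ⟨C, D, hadd, hnear⟩ := exists_near_halves hcard A B
  have decrease := sum_sq_add_sum_sq_lt hadd hnear hlt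
  have := hmin (hM'.trans (.exchange hadd.symm P))
  simp only [Multiset.map_cons, Multiset.sum_cons] at this
  omega

end ContingencyTables

section BinaryTables

-- In `Fin 3`, the index other than `k ≠ k'` is `-(k + k')`.
theorem eq_third_or_eq_or_eq : ∀ {k k' : Fin 3}, k ≠ k' → ∀ p, p = -(k + k') ∨ p = k ∨ p = k' := by
  decide

theorem sum_eq_third_add_add {k k' : Fin 3} (hk : k ≠ k') (f : Fin 3 → ℤ) :
    ∑ p, f p = f (-(k + k')) + f k + f k' := by
  have univ_eq : Finset.univ = {-(k + k'), k, k'} := by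
    ext p
    simpa using eq_third_or_eq_or_eq hk p
  have third_notMem : -(k + k') ∉ ({k, k'} : Finset (Fin 3)) := by
    revert k k'
    decide
  rw [univ_eq, Finset.sum_insert third_notMem, Finset.sum_pair hk, add_assoc]

/-- The contingency tables with entries `0` and `1`, the residues of tables in a unit cell. -/
def binaryTables {ι κ : Type*} [Fintype ι] [Fintype κ] (r : ι → ℤ) (c : κ → ℤ) :
    Set (Matrix ι κ ℕ) :=
  {a ∈ contingencyTables r c | ∀ i j, a i j ≤ 1}

variable {r c : Fin 3 → ℤ} {a b : Matrix (Fin 3) (Fin 3) ℕ}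

theorem eq_of_third_apply_eq (ha : a ∈ binaryTables r c) (hb : b ∈ binaryTables r c)
    {k k' l l' : Fin 3} (hk : k ≠ k') (hl : l ≠ l') (hrow : ∀ j, a k j ≤ a k' j)
    (hcol : ∀ i, a i l ≤ a i l')
    (hab : b (-(k + k')) (-(l + l')) = a (-(k + k')) (-(l + l'))) : b = a := by
  obtain ⟨ha, ha_le⟩ := ha
  obtain ⟨hb, hb_le⟩ := hb
  have row_eq (p) := (ha.1 p).trans (hb.1 p).symm
  have col_eq (q) := (ha.2 q).trans (hb.2 q).symm
  simp only [sum_eq_third_add_add hk] at col_eq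
  simp only [sum_eq_third_add_add hl] at row_eq
  have rows := eq_third_or_eq_or_eq hk
  have cols := eq_third_or_eq_or_eq hl
  generalize -(k + k') = i at *
  generalize -(l + l') = j at *
  -- `a k q ≤ a k' q` are zero-one entries with a given sum, so `a k q` is as small as possible.
  have row_k_le (q) (h : b i q = a i q) : a k q ≤ b k q := by
    have := col_eq q
    have := hrow q
    have := ha_le k' q
    have := hb_le k' q
    omega
  have col_l_le (p) (h : b p j = a p j) : a p l ≤ b p l := by
    have := row_eq p
    have := hcol p
    have := ha_le p l'
    have := hb_le p l'
    omega
  have corner : b k j = a k j ∧ b i l = a i l ∧ b k l = a k l := by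
    have := row_k_le j hab
    have := col_l_le i hab
    grind
  obtain ⟨hkj, hil, hkl⟩ := corner
  ext p q
  rcases rows p with rfl | rfl | rfl <;> rcases cols q with rfl | rfl | rfl <;> grind

theorem forall_card_eq_one_or_two_of_incomparable : ∀ s : Fin 3 → Finset (Fin 3),
    (∀ k k', s k ⊆ s k' → k = k') →
      (∀ i, (s i).card = 1 ∧ (Finset.univ.filter fun k => i ∈ s k).card = 1) ∨
      (∀ i, (s i).card = 2 ∧ (Finset.univ.filter fun k => i ∈ s k).card = 2) := by
  decide +kernel

theorem margins_eq_one_or_two_of_rows_incomparable (ha : a ∈ binaryTables r c)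
    (hrows : ∀ k k', (∀ j, a k j ≤ a k' j) → k = k') :
    (∀ i, r i = 1 ∧ c i = 1) ∨ (∀ i, r i = 2 ∧ c i = 2) := by
  obtain ⟨ha, ha_le⟩ := ha
  have apply_eq (i j) : a i j = if a i j = 1 then 1 else 0 := by
    have := ha_le i j
    grind
  let support (i : Fin 3) : Finset (Fin 3) := {j | a i j = 1}
  have row_eq (i) : r i = (support i).card := by
    rw [← ha.1 i, Finset.card_filter, Nat.cast_sum]
    exact Finset.sum_congr rfl fun j _ => congrArg _ (apply_eq i j)
  have col_eq (j) : c j = (Finset.univ.filter fun i => j ∈ support i).card := by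
    rw [← ha.2 j, Finset.card_filter, Nat.cast_sum]
    refine Finset.sum_congr rfl fun i _ => congrArg _ ?_
    simpa [support] using apply_eq i j
  have incomparable (k k') (h : support k ⊆ support k') : k = k' := by
    refine hrows k k' fun j => ?_
    have := @h j
    have := ha_le k j
    grind
  simp only [row_eq, col_eq]
  exact_mod_cast forall_card_eq_one_or_two_of_incomparable support incomparable

theorem transpose_mem_binaryTables {ι κ : Type*} [Fintype ι] [Fintype κ] {r : ι → ℤ}
    {c : κ → ℤ} {a : Matrix ι κ ℕ} (ha : a ∈ binaryTables r c) :
    a.transpose ∈ binaryTables c r :=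
  ⟨⟨ha.1.2, ha.1.1⟩, fun j i => ha.2 i j⟩

theorem margins_eq_one_or_two_or_exists_determining_entry (ha : a ∈ binaryTables r c) :
    (∀ i, r i = 1 ∧ c i = 1) ∨ (∀ i, r i = 2 ∧ c i = 2) ∨
      ∃ i j, ∀ b ∈ binaryTables r c, b i j = a i j → b = a := by
  by_cases hrows : ∀ k k', (∀ j, a k j ≤ a k' j) → k = k'
  · have := margins_eq_one_or_two_of_rows_incomparable ha hrows
    tauto
  by_cases hcols : ∀ l l', (∀ i, a i l ≤ a i l') → l = l'
  · have := margins_eq_one_or_two_of_rows_incomparable (transpose_mem_binaryTables ha) hcols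
    grind
  push Not at hrows hcols
  obtain ⟨k, k', hrow, hk⟩ := hrows
  obtain ⟨l, l', hcol, hl⟩ := hcols
  exact .inr (.inr ⟨_, _, fun b hb hab =>
    eq_of_third_apply_eq ha hb hk hl hrow hcol hab⟩)

theorem exists_eq_ite_of_sum_eq_one {ι : Type*} [Fintype ι] [DecidableEq ι] {f : ι → ℕ}
    (hf : ∑ i, f i = 1) : ∃ i, ∀ j, f j = if i = j then 1 else 0 := by
  obtain ⟨i, hi⟩ := (Finsupp.sum_eq_one_iff (Finsupp.equivFunOnFinite.symm f)).mp
    ((Finsupp.sum_fintype _ _ fun _ => rfl).trans hf)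
  exact ⟨i, fun j => (DFunLike.congr_fun hi j).trans Finsupp.single_apply⟩

theorem exists_perm_of_forall_margin_eq_one {ι : Type*} [Fintype ι] [DecidableEq ι]
    {r c : ι → ℤ} {a : Matrix ι ι ℕ} (ha : a ∈ contingencyTables r c)
    (h : ∀ i, r i = 1 ∧ c i = 1) :
    ∃ σ : Equiv.Perm ι, ∀ i j, a i j = if σ i = j then 1 else 0 := by
  have row_sum (i) : ∑ j, a i j = 1 := by exact_mod_cast (ha.1 i).trans (h i).1
  have col_sum (j) : ∑ i, a i j = 1 := by exact_mod_cast (ha.2 j).trans (h j).2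
  choose σ hσ using fun i => exists_eq_ite_of_sum_eq_one (row_sum i)
  choose τ hτ using fun j => exists_eq_ite_of_sum_eq_one (col_sum j)
  have inverse (i j) : σ i = j ↔ τ j = i := by
    have := (hσ i j).symm.trans (hτ j i)
    grind
  exact ⟨⟨σ, τ, fun i => (inverse i _).mp rfl, fun j => (inverse _ j).mpr rfl⟩, hσ⟩

theorem exists_perm_of_forall_margin_eq_two (ha : a ∈ binaryTables r c)
    (h : ∀ i, r i = 2 ∧ c i = 2) :
    ∃ σ : Equiv.Perm (Fin 3), ∀ i j, a i j = if σ i = j then 0 else 1 := by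
  obtain ⟨ha, ha_le⟩ := ha
  have complement : (Matrix.of fun i j => 1 - a i j) ∈ contingencyTables 1 1 := by
    simp [contingencyTables, ha_le, ha.1, ha.2, h]
  obtain ⟨σ, hσ⟩ := exists_perm_of_forall_margin_eq_one complement fun _ => ⟨rfl, rfl⟩
  refine ⟨σ, fun i j => ?_⟩
  have := hσ i j
  have := ha_le i j
  grind [Matrix.of_apply]

end BinaryTables

section PermutationClasses

open Equiv

variable {S T : Set (Perm (Fin 3))}

/-- The transposition of `Fin 3` that fixes `i`, so that `σ * transpositionFixing i` is the only
permutation other than `σ` that agrees with `σ` at `i`. -/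
def transpositionFixing (i : Fin 3) : Perm (Fin 3) :=
  swap (i + 1) (i + 2)

theorem transpositionFixing_apply_self : ∀ i, transpositionFixing i i = i := by
  decide

theorem transpositionFixing_apply_ne : ∀ {i i' : Fin 3}, i ≠ i' → ∀ x,
    transpositionFixing i x ≠ transpositionFixing i' x := by
  decide

theorem eq_mul_transpositionFixing : ∀ {σ τ : Perm (Fin 3)} {i : Fin 3}, τ i = σ i → τ ≠ σ →
    τ = σ * transpositionFixing i := by
  decide

theorem exists_mul_transpositionFixing_mul_apply_eq : ∀ (σ : Perm (Fin 3)) (i j : Fin 3),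
    ∃ p q, (σ * transpositionFixing p * transpositionFixing q) i = j := by
  decide

theorem eq_add_one_or_eq_add_two : ∀ {i x : Fin 3}, x ≠ i → x = i + 1 ∨ x = i + 2 := by
  decide

theorem mul_transpositionFixing_mem (hST : Disjoint S T)
    (hagree : ∀ σ ∈ S, ∀ i, ∃ τ ∈ T, τ i = σ i) {σ : Perm (Fin 3)} (hσ : σ ∈ S) (i : Fin 3) :
    σ * transpositionFixing i ∈ T := by
  obtain ⟨τ, hτ, h⟩ := hagree σ hσ i
  exact eq_mul_transpositionFixing h (hST.ne_of_mem hσ hτ).symm ▸ hτ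

theorem exists_perm_cover (hST : Disjoint S T) (hS : S.Nonempty)
    (hagree : ∀ σ ∈ S, ∀ i, ∃ τ ∈ T, τ i = σ i) (hagree' : ∀ τ ∈ T, ∀ i, ∃ σ ∈ S, σ i = τ i)
    (i j : Fin 3) :
    ∃ σ ∈ S, ∃ τ ∈ T, ∃ τ' ∈ T, σ i = j ∧ (∀ x, τ x ≠ τ' x) ∧
      ∀ x, x ≠ i → τ x = σ x ∨ τ' x = σ x := by
  obtain ⟨σ₀, hσ₀⟩ := hS
  obtain ⟨p, q, hij⟩ := exists_mul_transpositionFixing_mul_apply_eq σ₀ i j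
  set σ := σ₀ * transpositionFixing p * transpositionFixing q
  have hσ : σ ∈ S := mul_transpositionFixing_mem hST.symm hagree'
    (mul_transpositionFixing_mem hST hagree hσ₀ p) q
  refine ⟨σ, hσ, σ * transpositionFixing (i + 1), mul_transpositionFixing_mem hST hagree hσ _,
    σ * transpositionFixing (i + 2), mul_transpositionFixing_mem hST hagree hσ _, hij,
    fun x => σ.injective.ne (transpositionFixing_apply_ne (by simp) x), fun x hx => ?_⟩
  obtain rfl | rfl := eq_add_one_or_eq_add_two hx
  · exact .inl (congrArg σ (transpositionFixing_apply_self _))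
  · exact .inr (congrArg σ (transpositionFixing_apply_self _))

end PermutationClasses

section Cover

/-- Every value that a matrix of `S` has in some position is the value of a matrix of `T` in the
same position. -/
def EntriesOccurIn {ι κ α : Type*} (S T : Set (Matrix ι κ α)) : Prop :=
  ∀ a ∈ S, ∀ i j, ∃ b ∈ T, b i j = a i j

variable {r c : Fin 3 → ℤ} {S T : Set (Matrix (Fin 3) (Fin 3) ℕ)}

theorem exists_cover_of_subset_range {f : Equiv.Perm (Fin 3) → Matrix (Fin 3) (Fin 3) ℕ}
    (hf : ∀ σ τ i, f τ i (σ i) = f σ i (σ i) → τ i = σ i)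
    (hSf : S ⊆ Set.range f) (hTf : T ⊆ Set.range f) (hST : Disjoint S T) (hS : S.Nonempty)
    (hagree : EntriesOccurIn S T) (hagree' : EntriesOccurIn T S) (i j : Fin 3) :
    ∃ σ τ τ', f σ ∈ S ∧ f τ ∈ T ∧ f τ' ∈ T ∧ σ i = j ∧ (∀ x, τ x ≠ τ' x) ∧
      ∀ x, x ≠ i → τ x = σ x ∨ τ' x = σ x := by
  obtain ⟨σ, hσ, τ, hτ, τ', hτ', h⟩ := exists_perm_cover (S := f ⁻¹' S) (T := f ⁻¹' T)
    (hST.preimage f) (hS.preimage' hSf)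
    (fun σ hσ i => by
      obtain ⟨b, hb, h⟩ := hagree _ hσ i (σ i)
      obtain ⟨τ, rfl⟩ := hTf hb
      exact ⟨τ, hb, hf σ τ i h⟩)
    (fun τ hτ i => by
      obtain ⟨a, ha, h⟩ := hagree' _ hτ i (τ i)
      obtain ⟨σ, rfl⟩ := hSf ha
      exact ⟨σ, ha, hf τ σ i h⟩) i j
  exact ⟨σ, τ, τ', hσ, hτ, hτ', h⟩

theorem exists_cover_of_margins_eq_one (hSr : S ⊆ binaryTables r c) (hTr : T ⊆ binaryTables r c)
    (hST : Disjoint S T) (hS : S.Nonempty) (hagree : EntriesOccurIn S T)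
    (hagree' : EntriesOccurIn T S) (h : ∀ i, r i = 1 ∧ c i = 1) (i j : Fin 3) :
    ∃ a ∈ S, ∃ b ∈ T, ∃ b' ∈ T, b ≠ b' ∧ ∀ k l, (k, l) ≠ (i, j) → a k l ≤ b k l + b' k l := by
  let f (σ : Equiv.Perm (Fin 3)) : Matrix (Fin 3) (Fin 3) ℕ := fun i j => if σ i = j then 1 else 0
  have mem_range {a} (ha : a ∈ binaryTables r c) : a ∈ Set.range f := by
    obtain ⟨σ, hσ⟩ := exists_perm_of_forall_margin_eq_one ha.1 h
    exact ⟨σ, by ext i j; exact (hσ i j).symm⟩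
  obtain ⟨σ, τ, τ', hσ, hτ, hτ', hij, hne, hcover⟩ := exists_cover_of_subset_range (f := f)
    (by simp [f]) (fun a ha => mem_range (hSr ha)) (fun b hb => mem_range (hTr hb)) hST hS hagree
    hagree' i j
  refine ⟨f σ, hσ, f τ, hτ, f τ', hτ', fun heq => ?_, fun k l hkl => ?_⟩
  · have := congrFun₂ heq i (τ i)
    simp [f, (hne i).symm] at this
  · have := hcover k
    grind

theorem exists_cover_of_margins_eq_two (hSr : S ⊆ binaryTables r c) (hTr : T ⊆ binaryTables r c)
    (hST : Disjoint S T) (hS : S.Nonempty) (hagree : EntriesOccurIn S T)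
    (hagree' : EntriesOccurIn T S) (h : ∀ i, r i = 2 ∧ c i = 2) :
    ∃ a ∈ S, ∃ b ∈ T, ∃ b' ∈ T, b ≠ b' ∧ ∀ k l, a k l ≤ b k l + b' k l := by
  let f (σ : Equiv.Perm (Fin 3)) : Matrix (Fin 3) (Fin 3) ℕ := fun i j => if σ i = j then 0 else 1
  have mem_range {a} (ha : a ∈ binaryTables r c) : a ∈ Set.range f := by
    obtain ⟨σ, hσ⟩ := exists_perm_of_forall_margin_eq_two ha h
    exact ⟨σ, by ext i j; exact (hσ i j).symm⟩
  obtain ⟨σ, τ, τ', hσ, hτ, hτ', -, hne, -⟩ := exists_cover_of_subset_range (f := f)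
    (by simp [f]) (fun a ha => mem_range (hSr ha)) (fun b hb => mem_range (hTr hb)) hST hS hagree
    hagree' 0 0
  refine ⟨f σ, hσ, f τ, hτ, f τ', hτ', fun heq => ?_, fun k l => ?_⟩
  · have := congrFun₂ heq 0 (τ 0)
    simp [f, (hne 0).symm] at this
  · have := hne k
    grind

theorem exists_cover (hSr : S ⊆ binaryTables r c) (hTr : T ⊆ binaryTables r c)
    (hST : Disjoint S T) (hS : S.Nonempty) (hagree : EntriesOccurIn S T)
    (hagree' : EntriesOccurIn T S) {m : Matrix (Fin 3) (Fin 3) ℕ}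
    (hm : (∀ i, r i = 1 ∧ c i = 1) → m ≠ 0) :
    ∃ a ∈ S, ∃ b ∈ T, ∃ b' ∈ T, b ≠ b' ∧ ∀ k l, a k l ≤ b k l + b' k l + m k l := by
  obtain ⟨a, ha⟩ := hS
  obtain hone | htwo | ⟨i, j, hdet⟩ :=
    margins_eq_one_or_two_or_exists_determining_entry (hSr ha)
  · obtain ⟨i, j, hij⟩ : ∃ i j, m i j ≠ 0 := by
      simpa [← Matrix.ext_iff] using hm hone
    obtain ⟨a, ha, b, hb, b', hb', hne, hle⟩ :=
      exists_cover_of_margins_eq_one hSr hTr hST ⟨a, ha⟩ hagree hagree' hone i j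
    refine ⟨a, ha, b, hb, b', hb', hne, fun k l => ?_⟩
    by_cases hkl : (k, l) = (i, j)
    · obtain ⟨rfl, rfl⟩ := Prod.mk.inj hkl
      have := (hSr ha).2 k l
      omega
    · exact (hle k l hkl).trans (Nat.le_add_right _ _)
  · obtain ⟨a, ha, b, hb, b', hb', hne, hle⟩ :=
      exists_cover_of_margins_eq_two hSr hTr hST ⟨a, ha⟩ hagree hagree' htwo
    exact ⟨a, ha, b, hb, b', hb', hne, fun k l => (hle k l).trans (Nat.le_add_right _ _)⟩
  · obtain ⟨b, hb, hab⟩ := hagree a ha i j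
    exact absurd (hdet b (hTr hb) hab) (hST.ne_of_mem ha hb).symm

end Cover

section Connectivity

variable {r c : Fin 3 → ℤ} {M N : Multiset (contingencyTables r c)}

/-- The matrices `A` with `m ≤ A ≤ m + 1` entrywise, so that `A - m` has entries `0` and `1`. -/
def unitCell {ι κ : Type*} (m : Matrix ι κ ℕ) : Set (Matrix ι κ ℕ) :=
  {A | ∀ i j, m i j ≤ A i j ∧ A i j ≤ m i j + 1}

theorem sub_mem_binaryTables {ι κ : Type*} [Fintype ι] [Fintype κ] {r : ι → ℤ} {c : κ → ℤ}
    {A m : Matrix ι κ ℕ} (hA : A ∈ contingencyTables r c ∩ unitCell m) :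
    A - m ∈ binaryTables (fun i => r i - ∑ j, (m i j : ℤ)) (fun j => c j - ∑ i, (m i j : ℤ)) := by
  obtain ⟨⟨hrow, hcol⟩, hm⟩ := hA
  refine ⟨?_, fun i j => Nat.sub_le_iff_le_add'.mpr (hm i j).2⟩
  simp [contingencyTables, Nat.cast_sub, hm _ _, hrow, hcol]

theorem injOn_sub_unitCell {ι κ : Type*} (m : Matrix ι κ ℕ) : Set.InjOn (· - m) (unitCell m) := by
  intro A hA B hB h
  ext i j
  exact tsub_left_inj (hA i j).1 (hB i j).1 |>.mp (congrFun₂ h i j)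

theorem EntriesOccurIn.image_sub {ι κ : Type*} {S T : Set (Matrix ι κ ℕ)} (h : EntriesOccurIn S T)
    (m : Matrix ι κ ℕ) : EntriesOccurIn ((· - m) '' S) ((· - m) '' T) := by
  rintro _ ⟨A, hA, rfl⟩ i j
  obtain ⟨B, hB, hAB⟩ := h A hA i j
  exact ⟨B - m, ⟨B, hB, rfl⟩, congrArg (· - m i j) hAB⟩

theorem exists_le_add_of_subset_unitCell {S T : Set (Matrix (Fin 3) (Fin 3) ℕ)}
    {m : Matrix (Fin 3) (Fin 3) ℕ} (hB : ¬((∀ i, r i = 1) ∧ ∀ j, c j = 1))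
    (hSm : S ⊆ contingencyTables r c ∩ unitCell m) (hTm : T ⊆ contingencyTables r c ∩ unitCell m)
    (hST : Disjoint S T) (hS : S.Nonempty) (hagree : EntriesOccurIn S T)
    (hagree' : EntriesOccurIn T S) :
    ∃ A ∈ S, ∃ B ∈ T, ∃ B' ∈ T, B ≠ B' ∧ ∀ i j, A i j ≤ B i j + B' i j := by
  have ne_zero (h : ∀ i, r i - ∑ j, (m i j : ℤ) = 1 ∧ c i - ∑ j, (m j i : ℤ) = 1) : m ≠ 0 := by
    rintro rfl
    exact hB ⟨fun i => by simpa using (h i).1, fun j => by simpa using (h j).2⟩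
  have hinj := injOn_sub_unitCell m
  obtain ⟨_, ⟨A, hA, rfl⟩, _, ⟨B, hB, rfl⟩, _, ⟨B', hB', rfl⟩, hne, hle⟩ :=
    exists_cover (Set.image_subset_iff.mpr fun A hA => sub_mem_binaryTables (hSm hA))
      (Set.image_subset_iff.mpr fun B hB => sub_mem_binaryTables (hTm hB))
      (Set.disjoint_image_image fun A hA B hB h =>
        hST.ne_of_mem hA hB (hinj (hSm hA).2 (hTm hB).2 h))
      (hS.image _) (hagree.image_sub m) (hagree'.image_sub m) ne_zero
  refine ⟨A, hA, B, hB, B', hB', fun h => hne (congrArg (· - m) h), fun i j => ?_⟩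
  have : A i j - m i j ≤ (B i j - m i j) + (B' i j - m i j) + m i j := hle i j
  have := (hTm hB).2 i j
  have := (hTm hB').2 i j
  omega

theorem entriesOccurIn_of_map_eq {ι κ : Type*} {L : Set (Matrix ι κ ℕ)} {M N : Multiset L}
    (h : ∀ i j, M.map (fun A => A.1 i j) = N.map fun A => A.1 i j) :
    EntriesOccurIn (Subtype.val '' {A | A ∈ M}) (Subtype.val '' {A | A ∈ N}) := by
  rintro _ ⟨A, hA, rfl⟩ i j
  obtain ⟨B, hB, hAB⟩ := Multiset.mem_map.mp (h i j ▸ Multiset.mem_map_of_mem _ hA)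
  exact ⟨B, ⟨B, hB, rfl⟩, hAB⟩

theorem exists_quadEquiv_cons_of_mem_unitCell (hB : ¬((∀ i, r i = 1) ∧ ∀ j, c j = 1))
    {m : Matrix (Fin 3) (Fin 3) ℕ} (hM : ∀ A ∈ M, A.1 ∈ unitCell m)
    (hN : ∀ B ∈ N, B.1 ∈ unitCell m) (hM0 : M ≠ 0)
    (hMN : ∀ i j, M.map (fun A => A.1 i j) = N.map fun B => B.1 i j) :
    ∃ A ∈ M, ∃ N', QuadEquiv Subtype.val N (A ::ₘ N') := by
  by_cases hdisj : Disjoint {A | A ∈ M} {B | B ∈ N}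
  · obtain ⟨_, ⟨A, hA, rfl⟩, _, ⟨B, hB, rfl⟩, _, ⟨B', hB', rfl⟩, hne, hle⟩ :=
      exists_le_add_of_subset_unitCell hB (Set.image_subset_iff.mpr fun A hA => ⟨A.2, hM A hA⟩)
        (Set.image_subset_iff.mpr fun B hB => ⟨B.2, hN B hB⟩)
        ((Set.disjoint_image_iff Subtype.val_injective).mpr hdisj)
        (Set.Nonempty.image _ (Multiset.exists_mem_of_ne_zero hM0)) (entriesOccurIn_of_map_eq hMN)
        (entriesOccurIn_of_map_eq fun i j => (hMN i j).symm)
    exact ⟨A, hA, exists_quadEquiv_cons hB hB' (ne_of_apply_ne _ hne) hle⟩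
  · obtain ⟨A, hAM, hAN⟩ := Set.not_disjoint_iff.mp hdisj
    obtain ⟨N', rfl⟩ := Multiset.exists_cons_of_mem hAN
    exact ⟨A, hAM, N', .refl _⟩

theorem sum_map_apply {ι κ : Type*} {L : Set (Matrix ι κ ℕ)} (M : Multiset L) (i : ι) (j : κ) :
    (M.map fun A => A.1 i j).sum = (M.map Subtype.val).sum i j := by
  have := map_multiset_sum (Matrix.entryAddMonoidHom ℕ i j) (M.map Subtype.val)
  rw [Multiset.map_map] at this
  exact this.symm

theorem exists_quadEquiv_cons_of_isBalanced (hB : ¬((∀ i, r i = 1) ∧ ∀ j, c j = 1))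
    (hM : ∀ i j, IsBalanced (M.map fun A => A.1 i j))
    (hN : ∀ i j, IsBalanced (N.map fun A => A.1 i j)) (hM0 : M ≠ 0) (hcard : M.card = N.card)
    (hsum : (M.map Subtype.val).sum = (N.map Subtype.val).sum) :
    ∃ A ∈ M, ∃ N', QuadEquiv Subtype.val N (A ::ₘ N') := by
  have hMN (i j) : M.map (fun A => A.1 i j) = N.map fun B => B.1 i j :=
    (hM i j).eq_of_card_eq_of_sum_eq (hN i j) (by simpa using hcard)
      (by rw [sum_map_apply, sum_map_apply, hsum])
  let m : Matrix (Fin 3) (Fin 3) ℕ := fun i j =>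
    (M.map fun A => A.1 i j).sum / (M.map fun A => A.1 i j).card
  have mem_unitCell {A : contingencyTables r c}
      (hA : ∀ i j, A.1 i j ∈ M.map fun A => A.1 i j) : A.1 ∈ unitCell m :=
    fun i j => ⟨(hM i j).average_le (hA i j), (hM i j).le_average_add_one (hA i j)⟩
  exact exists_quadEquiv_cons_of_mem_unitCell hB
    (fun A hA => mem_unitCell fun i j => Multiset.mem_map_of_mem _ hA)
    (fun B hB => mem_unitCell fun i j => hMN i j ▸ Multiset.mem_map_of_mem _ hB) hM0 hMN

theorem quadEquiv_of_card_eq_of_sum_eq (hB : ¬((∀ i, r i = 1) ∧ ∀ j, c j = 1))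
    (hcard : M.card = N.card) (hsum : (M.map Subtype.val).sum = (N.map Subtype.val).sum) :
    QuadEquiv Subtype.val M N := by
  induction h : M.card generalizing M N with
  | zero =>
    rw [h] at hcard
    rw [Multiset.card_eq_zero.mp h, Multiset.card_eq_zero.mp hcard.symm]
    exact .refl 0
  | succ n ih =>
    obtain ⟨M', hMM', hM'⟩ := exists_quadEquiv_isBalanced (by simp) M
    obtain ⟨N', hNN', hN'⟩ := exists_quadEquiv_isBalanced (by simp) N
    obtain ⟨A, hA, N₁, hN₁⟩ : ∃ A ∈ M', ∃ N₁, QuadEquiv Subtype.val N' (A ::ₘ N₁) :=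
      exists_quadEquiv_cons_of_isBalanced hB hM' hN'
        (Multiset.card_pos.mp (hMM'.card_eq ▸ h ▸ n.succ_pos))
        (hMM'.card_eq.symm.trans (hcard.trans hNN'.card_eq))
        (hMM'.sum_map_eq.symm.trans (hsum.trans hNN'.sum_map_eq))
    obtain ⟨M₁, rfl⟩ := Multiset.exists_cons_of_mem hA
    have hcard₁ := (hMM'.card_eq.symm.trans hcard).trans (hNN'.trans hN₁).card_eq
    have hsum₁ := (hMM'.sum_map_eq.symm.trans hsum).trans (hNN'.trans hN₁).sum_map_eq
    have hM₁ := h.symm.trans hMM'.card_eq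
    simp only [Multiset.card_cons, Multiset.map_cons, Multiset.sum_cons, add_left_inj,
      add_right_inj] at hcard₁ hsum₁ hM₁
    exact hMM'.trans (((ih hcard₁ hsum₁ hM₁.symm).cons A).trans (hNN'.trans hN₁).symm)

end Connectivity

section ExponentVectors

variable {ι κ : Type*} [Fintype ι] [Fintype κ]

/-- The exponent vector of the monomial `t₀ * ∏ t i j ^ A i j`, where `none` stands for `t₀`. -/
noncomputable def exponent (A : Matrix ι κ ℕ) : Option (ι × κ) →₀ ℕ :=
  Finsupp.equivFunOnFinite.symm fun o => o.elim 1 fun p => A p.1 p.2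

theorem monomial_exponent (k : Type*) [CommRing k] (A : Matrix ι κ ℕ) :
    monomial (exponent A) (1 : k) = X none * ∏ i, ∏ j, X (some (i, j)) ^ A i j := by
  rw [monomial_eq, Finsupp.prod_fintype _ _ (by simp), Fintype.prod_option, Fintype.prod_prod_type]
  simp [exponent]

theorem exponent_add_exponent {A B A' B' : Matrix ι κ ℕ} (h : A + B = A' + B') :
    exponent A + exponent B = exponent A' + exponent B' := by
  ext o
  match o with
  | none => rfl
  | some (i, j) => exact congrFun₂ h i j

theorem sum_exponent_apply_none {L : Set (Matrix ι κ ℕ)} (M : Multiset L) :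
    (M.map fun A => exponent A.1).sum none = M.card := by
  rw [← Finsupp.applyAddHom_apply, map_multiset_sum, Multiset.map_map]
  simp [Function.comp_def, exponent]

theorem sum_exponent_apply_some {L : Set (Matrix ι κ ℕ)} (M : Multiset L) (i : ι) (j : κ) :
    (M.map fun A => exponent A.1).sum (some (i, j)) = (M.map Subtype.val).sum i j := by
  rw [← Finsupp.applyAddHom_apply, map_multiset_sum, Multiset.map_map, ← sum_map_apply]
  rfl

end ExponentVectors

theorem stmt0_general (k : Type*) [CommRing k] (r c : Fin 3 → ℤ)
    (hB : ¬ ((∀ i, r i = 1) ∧ (∀ j, c j = 1))) :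
    let φ : MvPolynomial (contingencyTables r c) k →ₐ[k] MvPolynomial (Option (Fin 3 × Fin 3)) k :=
      aeval fun A => X none * ∏ i, ∏ j, X (some (i, j)) ^ A.1 i j
    RingHom.ker φ = Ideal.span {f | f ∈ RingHom.ker φ ∧ f.totalDegree ≤ 2} := by
  intro φ
  have hφ (A) : φ (X A) = monomial (exponent A.1) 1 := by rw [monomial_exponent]; exact aeval_X _ A
  refine ker_eq_span_totalDegree_le_two (d := Subtype.val) hφ
    (fun _ _ _ _ => exponent_add_exponent) fun M N h => quadEquiv_of_card_eq_of_sum_eq hB ?_ ?_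
  · rw [← sum_exponent_apply_none, h, sum_exponent_apply_none]
  · ext i j
    rw [← sum_exponent_apply_some, h, sum_exponent_apply_some]

/-- If the `3 × 3` transportation polytope `T_{rc}` is not the Birkhoff polytope `B₃`,
then its toric ideal is quadratically generated: the kernel of the monomial map `φ` is
generated by its elements of total degree at most `2`. -/
theorem stmt0 (k : Type*) [Field k]
    (r c : Fin 3 → ℤ) (hr : ∀ i, 0 < r i) (hc : ∀ j, 0 < c j)
    (hs : ∑ i, r i = ∑ j, c j)
    (hB : ¬ ((∀ i, r i = 1) ∧ (∀ j, c j = 1)))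
    (L : Set (Matrix (Fin 3) (Fin 3) ℕ))
    (hL : L = {A | (∀ i, (∑ j, (A i j : ℤ)) = r i) ∧ (∀ j, (∑ i, (A i j : ℤ)) = c j)})
    (φ : MvPolynomial L k →ₐ[k] MvPolynomial (Option (Fin 3 × Fin 3)) k)
    (hφ : φ = MvPolynomial.aeval fun A : L =>
      X none * ∏ i, ∏ j, X (some (i, j)) ^ ((A : Matrix (Fin 3) (Fin 3) ℕ) i j)) :
    RingHom.ker φ = Ideal.span {f | f ∈ RingHom.ker φ ∧ f.totalDegree ≤ 2} := by
  subst hL hφ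
  exact stmt0_general k r c hB
end

section
/- Let k be a field. For each permutation σ ∈ S₃ let A_σ denote the corresponding 3×3 permutation matrix, and let φ : k[x_σ : σ ∈ S₃] → k[t₀, t_{ij} : 1 ≤ i,j ≤ 3] be the k-algebra homomorphism sending x_σ to t₀ · t_{1σ(1)} t_{2σ(2)} t_{3σ(3)}. Then ker φ is the principal ideal generated by the cubic binomial x_{id} x_{(123)} x_{(132)} − x_{(23)} x_{(12)} x_{(13)}, i.e., the product of the variables indexed by the three even permutations minus the product of the variables indexed by the three odd permutations. -/
open MvPolynomial

/-!
The kernel of a monomial map is spanned by the binomials `x^m - x^m'` whose two monomials have the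
same image. For `S₃`, an even permutation `σ` and an odd permutation `τ` agree at exactly one `i`,
and they are the only permutations sending `i` to `σ i`, so the exponent of `t_{i,σ(i)}` in the
image of `x^m` is `m σ + m τ`. Hence if `x^m` and `x^m'` have the same image, then `m - m'` is a
constant `d` on the even permutations and `-d` on the odd ones, and `x^m - x^m'` is a monomial times
the difference of the `|d|`-th powers of the even and the odd product.
-/

namespace BirkhoffToric

open Equiv.Perm (ofSign mem_ofSign)

section Monomials

variable {α β R : Type*} [CommSemiring R]

lemma prod_X_eq_monomial (s : Finset α) :
    ∏ a ∈ s, (X a : MvPolynomial α R) = monomial (∑ a ∈ s, Finsupp.single a 1) 1 :=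
  (monomial_sum_one s fun a => Finsupp.single a 1).symm

lemma aeval_monomial_monomial (a : α → β →₀ ℕ) (m : α →₀ ℕ) :
    aeval (fun i => monomial (a i) (1 : R)) (monomial m (1 : R)) =
      monomial (Finsupp.linearCombination ℕ a m) 1 := by
  simp only [aeval_monomial, Finsupp.linearCombination_apply, monomial_finsupp_sum_index,
    monomial_pow, one_pow, map_one]

end Monomials

section Binomials

variable {α β R : Type*} [CommRing R]

theorem ker_aeval_monomial_eq_span (a : α → β →₀ ℕ) :
    RingHom.ker (aeval (R := R) fun i => monomial (a i) (1 : R)) =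
      Ideal.span {f | ∃ m m' : α →₀ ℕ,
        Finsupp.linearCombination ℕ a m = Finsupp.linearCombination ℕ a m' ∧
          f = monomial m 1 - monomial m' 1} := by
  set φ := aeval (R := R) fun i => monomial (a i) (1 : R)
  set A := Finsupp.linearCombination ℕ a
  set I : Ideal (MvPolynomial α R) := Ideal.span _ with hI
  apply le_antisymm
  · -- Modulo `I` a monomial depends only on its image, so the quotient map factors through `φ`.
    let lift : MvPolynomial β R →ₗ[R] MvPolynomial α R ⧸ I :=
      (basisMonomials β R).constr R fun n =>
        Ideal.Quotient.mkₐ R I (monomial (Function.invFun A n) 1)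
    have lift_monomial (n : β →₀ ℕ) : lift (monomial n 1) =
        Ideal.Quotient.mkₐ R I (monomial (Function.invFun A n) 1) := by
      simpa only [coe_basisMonomials] using (basisMonomials β R).constr_basis R _ n
    have lift_comp : lift ∘ₗ φ.toLinearMap = (Ideal.Quotient.mkₐ R I).toLinearMap := by
      refine (basisMonomials α R).ext fun m => ?_
      simp only [coe_basisMonomials, LinearMap.comp_apply, AlgHom.toLinearMap_apply, φ,
        aeval_monomial_monomial, lift_monomial]
      refine Ideal.Quotient.eq.2 (Ideal.subset_span ⟨_, _, ?_, rfl⟩)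
      exact Function.invFun_eq ⟨m, rfl⟩
    intro f hf
    rw [← Ideal.Quotient.eq_zero_iff_mem]
    calc Ideal.Quotient.mk I f = lift (φ f) := (LinearMap.congr_fun lift_comp f).symm
      _ = 0 := by rw [(RingHom.mem_ker).1 hf, map_zero]
  · rw [hI, Ideal.span_le]
    rintro _ ⟨m, m', h, rfl⟩
    rw [SetLike.mem_coe, RingHom.mem_ker, map_sub, aeval_monomial_monomial,
      aeval_monomial_monomial, h, sub_self]

lemma monomial_add_nsmul_sub_mem_span (r u v : α →₀ ℕ) (d : ℕ) :
    monomial (r + d • u) (1 : R) - monomial (r + d • v) 1 ∈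
      Ideal.span {monomial u (1 : R) - monomial v 1} := by
  have factor (w : α →₀ ℕ) :
      monomial (r + d • w) (1 : R) = monomial r 1 * monomial w 1 ^ d := by
    rw [monomial_pow, monomial_mul, one_pow, one_mul]
  rw [factor, factor, ← mul_sub]
  exact Ideal.mul_mem_left _ _ (Ideal.mem_span_singleton.2 (sub_dvd_pow_sub_pow _ _ _))

section TwoBlocks

variable [Fintype α] {s t : Finset α} {m m' : α →₀ ℕ}

lemma exists_eq_add_nsmul_of_add_eq_add (hst : IsCompl s t)
    (h : ∀ a ∈ s, ∀ b ∈ t, m a + m b = m' a + m' b)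
    {a₀ b₀ : α} (ha₀ : a₀ ∈ s) (hb₀ : b₀ ∈ t) (hle : m' a₀ ≤ m a₀) :
    ∃ (r : α →₀ ℕ) (d : ℕ), m = r + d • ∑ a ∈ s, Finsupp.single a 1 ∧
      m' = r + d • ∑ b ∈ t, Finsupp.single b 1 := by
  classical
  have h₀ := h a₀ ha₀ b₀ hb₀
  have on_s {a : α} (ha : a ∈ s) : m a = m' a + (m a₀ - m' a₀) := by
    have := h a ha b₀ hb₀
    omega
  have on_t {b : α} (hb : b ∈ t) : m' b = m b + (m a₀ - m' a₀) := by
    have := h a₀ ha₀ b hb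
    omega
  refine ⟨m ⊓ m', m a₀ - m' a₀, ?_, ?_⟩ <;> ext a <;>
    simp only [Finsupp.add_apply, Finsupp.inf_apply, Finsupp.smul_apply, smul_eq_mul,
      Finsupp.finsetSum_apply, Finsupp.single_apply, Finset.sum_ite_eq']
  all_goals
    by_cases ha : a ∈ s
    · have ha' : a ∉ t := Finset.disjoint_left.1 hst.disjoint ha
      have := on_s ha
      simp only [ha, ha', if_true, if_false]
      omega
    · have ha' : a ∈ t := by simpa only [← hst.compl_eq, Finset.mem_compl] using ha
      have := on_t ha'
      simp only [ha, ha', if_true, if_false]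
      omega

lemma monomial_sub_monomial_mem_span_prod_X (hst : IsCompl s t) (hs : s.Nonempty)
    (ht : t.Nonempty) (h : ∀ a ∈ s, ∀ b ∈ t, m a + m b = m' a + m' b) :
    monomial m (1 : R) - monomial m' 1 ∈
      Ideal.span {∏ a ∈ s, X a - ∏ b ∈ t, (X b : MvPolynomial α R)} := by
  obtain ⟨a₀, ha₀⟩ := hs
  obtain ⟨b₀, hb₀⟩ := ht
  wlog hle : m' a₀ ≤ m a₀ generalizing m m'
  · rw [sub_mem_comm_iff]
    exact this (fun a ha b hb => (h a ha b hb).symm) (le_of_not_ge hle)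
  obtain ⟨r, d, rfl, rfl⟩ := exists_eq_add_nsmul_of_add_eq_add hst h ha₀ hb₀ hle
  rw [prod_X_eq_monomial, prod_X_eq_monomial]
  exact monomial_add_nsmul_sub_mem_span r _ _ d

end TwoBlocks

end Binomials

section Permutations

variable {ι : Type*} [Fintype ι]

/-- The exponent vector of `t₀ ∏ i, t_{i,σ(i)}`, that is, the permutation matrix of `σ` together
with its homogenizing coordinate, which is indexed by `none`. -/
noncomputable def permExponent (σ : Equiv.Perm ι) : Option (ι × ι) →₀ ℕ :=
  Finsupp.single none 1 + ∑ i, Finsupp.single (some (i, σ i)) 1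

lemma monomial_permExponent (R : Type*) [CommSemiring R] (σ : Equiv.Perm ι) :
    monomial (permExponent σ) (1 : R) = X none * ∏ i, X (some (i, σ i)) := by
  rw [permExponent, ← one_mul (1 : R), ← monomial_mul, monomial_sum_one]
  rfl

variable [DecidableEq ι]

lemma linearCombination_permExponent_some (m : Equiv.Perm ι →₀ ℕ) (i j : ι) :
    Finsupp.linearCombination ℕ permExponent m (some (i, j)) = ∑ σ with σ i = j, m σ := by
  have permExponent_some (σ : Equiv.Perm ι) :
      permExponent σ (some (i, j)) = if σ i = j then 1 else 0 := by
    simp [permExponent, Finsupp.single_apply, ite_and]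
  rw [Finsupp.linearCombination_apply, Finsupp.sum_fintype _ _ (by simp)]
  simp [permExponent_some, Finset.sum_filter]

lemma isCompl_ofSign : IsCompl (ofSign 1 : Finset (Equiv.Perm ι)) (ofSign (-1)) := by
  refine ⟨Equiv.Perm.ofSign_disjoint, Finset.codisjoint_left.2 fun σ hσ => ?_⟩
  rw [mem_ofSign] at hσ ⊢
  exact (Int.units_eq_one_or _).resolve_left hσ

lemma prod_ofSign_apply_eq {M : Type*} [CommMonoid M] (hι : 2 < Fintype.card ι) (i : ι)
    (f : ι → M) : ∏ σ ∈ ofSign 1, f (σ i) = ∏ σ ∈ ofSign (-1), f (σ i) := by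
  obtain ⟨a, ha, b, hb, hab⟩ : ∃ a ∈ Finset.univ.erase i, ∃ b ∈ Finset.univ.erase i, a ≠ b := by
    rw [← Finset.one_lt_card, Finset.card_erase_of_mem (Finset.mem_univ i), Finset.card_univ]
    omega
  -- Composing with a transposition that fixes `i` flips the sign and keeps the value at `i`.
  refine Finset.prod_equiv (Equiv.mulRight (Equiv.swap a b)) (fun σ => ?_) fun σ _ => ?_
  · simp [mem_ofSign, Equiv.Perm.sign_swap hab]
  · rw [Equiv.coe_mulRight, Equiv.Perm.mul_apply, Equiv.swap_apply_of_ne_of_ne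
      (Finset.ne_of_mem_erase ha).symm (Finset.ne_of_mem_erase hb).symm]

lemma prod_ofSign_monomial_permExponent_eq (R : Type*) [CommSemiring R]
    (hι : 2 < Fintype.card ι) :
    ∏ σ ∈ ofSign 1, monomial (permExponent (ι := ι) σ) (1 : R) =
      ∏ σ ∈ ofSign (-1), monomial (permExponent σ) 1 := by
  obtain ⟨i₀⟩ : Nonempty ι := Fintype.card_pos_iff.1 (by omega)
  simp only [monomial_permExponent, Finset.prod_mul_distrib]
  congr 1
  · exact prod_ofSign_apply_eq hι i₀ fun _ => X none
  · rw [Finset.prod_comm, Finset.prod_comm (s := ofSign (-1))]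
    exact Finset.prod_congr rfl fun i _ => prod_ofSign_apply_eq hι i fun j => X (some (i, j))

end Permutations

lemma exists_filter_apply_eq_pair : ∀ σ ∈ (ofSign 1 : Finset (Equiv.Perm (Fin 3))),
    ∀ τ ∈ (ofSign (-1) : Finset (Equiv.Perm (Fin 3))),
      ∃ i, Finset.univ.filter (fun ρ : Equiv.Perm (Fin 3) => ρ i = σ i) = {σ, τ} := by
  decide

lemma add_eq_add_of_linearCombination_permExponent_eq {m m' : Equiv.Perm (Fin 3) →₀ ℕ}
    (h : Finsupp.linearCombination ℕ permExponent m = Finsupp.linearCombination ℕ permExponent m')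
    {σ τ : Equiv.Perm (Fin 3)} (hσ : σ ∈ ofSign 1) (hτ : τ ∈ ofSign (-1)) :
    m σ + m τ = m' σ + m' τ := by
  obtain ⟨i, hi⟩ := exists_filter_apply_eq_pair σ hσ τ hτ
  have hne : σ ≠ τ := Finset.disjoint_iff_ne.1 Equiv.Perm.ofSign_disjoint σ hσ τ hτ
  simpa only [linearCombination_permExponent_some, hi, Finset.sum_pair hne]
    using DFunLike.congr_fun h (some (i, σ i))

end BirkhoffToric

open BirkhoffToric in
theorem stmt1_general (R : Type*) [CommRing R]
    (φ : MvPolynomial (Equiv.Perm (Fin 3)) R →ₐ[R]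
      MvPolynomial (Option (Fin 3 × Fin 3)) R)
    (hφ : φ = MvPolynomial.aeval fun σ : Equiv.Perm (Fin 3) =>
      X none * ∏ i, X (some (i, σ i))) :
    RingHom.ker φ = Ideal.span
      {(∏ σ ∈ Equiv.Perm.ofSign 1, (X σ : MvPolynomial (Equiv.Perm (Fin 3)) R)) -
        ∏ σ ∈ Equiv.Perm.ofSign (-1), X σ} := by
  simp only [← monomial_permExponent R] at hφ
  subst hφ
  apply le_antisymm
  · rw [ker_aeval_monomial_eq_span, Ideal.span_le]
    rintro _ ⟨m, m', h, rfl⟩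
    exact monomial_sub_monomial_mem_span_prod_X isCompl_ofSign (by decide) (by decide)
      fun σ hσ τ hτ => add_eq_add_of_linearCombination_permExponent_eq h hσ hτ
  · rw [Ideal.span_singleton_le_iff_mem, RingHom.mem_ker, map_sub, sub_eq_zero]
    simpa only [map_prod, aeval_X] using prod_ofSign_monomial_permExponent_eq R (by decide)

/-- The toric ideal of the Birkhoff polytope `B₃` is the principal ideal generated by
the cubic binomial: product of the variables indexed by the even permutations minus
the product of the variables indexed by the odd permutations. -/
theorem stmt1 (k : Type*) [Field k]
    (φ : MvPolynomial (Equiv.Perm (Fin 3)) k →ₐ[k]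
      MvPolynomial (Option (Fin 3 × Fin 3)) k)
    (hφ : φ = MvPolynomial.aeval fun σ : Equiv.Perm (Fin 3) =>
      X none * ∏ i, X (some (i, σ i))) :
    RingHom.ker φ = Ideal.span
      {(∏ σ ∈ Finset.univ.filter fun σ : Equiv.Perm (Fin 3) => Equiv.Perm.sign σ = 1,
          (X σ : MvPolynomial (Equiv.Perm (Fin 3)) k)) -
        ∏ σ ∈ Finset.univ.filter fun σ : Equiv.Perm (Fin 3) => Equiv.Perm.sign σ = -1,
          X σ} :=
  stmt1_general k φ hφ
end

section
/- Let k be a field and let φ : k[x_σ : σ ∈ S₃] → k[t₀, t_{ij} : 1 ≤ i,j ≤ 3] be the k-algebra homomorphism sending x_σ to t₀ · t_{1σ(1)} t_{2σ(2)} t_{3σ(3)}. Then ker φ is nonzero, but every element of ker φ of total degree at most 2 is zero; in particular, the toric ideal of the Birkhoff polytope B₃ is not generated by its elements of degree at most 2 (it is not quadratically generated). -/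
open MvPolynomial

/-!
The map `φ` sends monomials to monomials, so its kernel is controlled by the coincidences between
the exponent vectors of images. The image of a monomial `m` records, for each pair `(i, j)`, the sum
of `m σ` over the permutations `σ` with `σ i = j`. In `S₃` each such set of permutations is a pair
`{σ, σ * swap x y}`, so if `m` and `n` have the same image then `m - n` changes sign under every
transposition, i.e. it is an integer multiple of the sign character. If `m ≠ n`, this gives
`6 ≤ ∑ σ, |m σ - n σ| ≤ deg m + deg n`, which rules out two monomials of degree at most `2`.
Conversely the sign character itself yields the cubic relation
`∏_{σ even} x_σ = ∏_{σ odd} x_σ`.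
-/

theorem ideal_ne_span_of_forall_eq_zero {R : Type*} [Semiring R] {I : Ideal R} {p : R → Prop}
    (hI : I ≠ ⊥) (hp : ∀ f ∈ I, p f → f = 0) : I ≠ Ideal.span {f | f ∈ I ∧ p f} := by
  intro hspan
  rw [hspan, Ne, Ideal.span_eq_bot] at hI
  exact hI fun f hf => hp f hf.1 hf.2

section MonomialMap

variable {R α β : Type*}

/-- The `R`-algebra homomorphism of polynomial rings sending the variable `x_s` to the monomial with
exponent vector `a s`; its kernel is the toric ideal of the vector configuration `a`. -/
noncomputable def monomialMap (R : Type*) [CommSemiring R] (a : α → β →₀ ℕ) :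
    MvPolynomial α R →ₐ[R] MvPolynomial β R :=
  aeval fun s => monomial (a s) 1

theorem monomialMap_monomial [CommSemiring R] (a : α → β →₀ ℕ) (m : α →₀ ℕ) (c : R) :
    monomialMap R a (monomial m c) = monomial (Finsupp.linearCombination ℕ a m) c := by
  simp only [monomialMap, aeval_monomial, monomial_pow, one_pow, algebraMap_eq]
  rw [Finsupp.linearCombination_apply, monomial_finsupp_sum_index]

theorem coeff_monomialMap_of_injOn [CommSemiring R] {a : α → β →₀ ℕ} {f : MvPolynomial α R}
    (hinj : Set.InjOn (Finsupp.linearCombination ℕ a) f.support) {m : α →₀ ℕ}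
    (hm : m ∈ f.support) :
    coeff (Finsupp.linearCombination ℕ a m) (monomialMap R a f) = coeff m f := by
  classical
  conv_lhs => rw [f.as_sum, map_sum, coeff_sum]
  simp only [monomialMap_monomial, coeff_monomial]
  rw [Finset.sum_eq_single_of_mem m hm, if_pos rfl]
  exact fun n hn hne => if_neg fun heq => hne (hinj hn hm heq)

theorem eq_zero_of_monomialMap_eq_zero [CommSemiring R] {a : α → β →₀ ℕ} {f : MvPolynomial α R}
    (hinj : Set.InjOn (Finsupp.linearCombination ℕ a) f.support)
    (hf : monomialMap R a f = 0) : f = 0 := by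
  rw [← support_eq_empty, Finset.eq_empty_iff_forall_notMem]
  intro m hm
  apply mem_support_iff.1 hm
  rw [← coeff_monomialMap_of_injOn hinj hm, hf, coeff_zero]

theorem ker_monomialMap_ne_bot [CommRing R] [Nontrivial R] {a : α → β →₀ ℕ} {m n : α →₀ ℕ}
    (hne : m ≠ n) (h : Finsupp.linearCombination ℕ a m = Finsupp.linearCombination ℕ a n) :
    RingHom.ker (monomialMap R a) ≠ ⊥ := by
  have hmem : monomial m 1 - monomial n 1 ∈ RingHom.ker (monomialMap R a) := by
    rw [RingHom.mem_ker, map_sub, monomialMap_monomial, monomialMap_monomial, h, sub_self]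
  intro hbot
  rw [hbot, Ideal.mem_bot, sub_eq_zero] at hmem
  exact hne (monomial_left_injective one_ne_zero hmem)

end MonomialMap

section PermExponent

open Equiv Equiv.Perm

variable {ι : Type*} [Fintype ι]

/-- The exponent vector of `t₀ * ∏ i, t_{i, σ i}`: the permutation matrix of `σ` together with a
homogenizing coordinate, indexed by `none`. -/
noncomputable def permExponent (σ : Perm ι) : Option (ι × ι) →₀ ℕ :=
  Finsupp.single none 1 + ∑ i, Finsupp.single (some (i, σ i)) 1

theorem monomial_permExponent (R : Type*) [CommSemiring R] (σ : Perm ι) :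
    (monomial (permExponent σ) 1 : MvPolynomial (Option (ι × ι)) R) =
      X none * ∏ i, X (some (i, σ i)) := by
  simp only [permExponent, X, ← monomial_sum_one, monomial_mul, one_mul]

theorem permExponent_none (σ : Perm ι) : permExponent σ none = 1 := by
  simp [permExponent]

variable [DecidableEq ι]

theorem permExponent_some (σ : Perm ι) (i j : ι) :
    permExponent σ (some (i, j)) = if σ i = j then 1 else 0 := by
  simp [permExponent, Finsupp.single_apply, ite_and]

theorem linearCombination_permExponent_apply (m : Perm ι →₀ ℕ) (c : Option (ι × ι)) :
    Finsupp.linearCombination ℕ permExponent m c = ∑ σ, m σ * permExponent σ c := by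
  simp [Finsupp.linearCombination_apply, Finsupp.sum_fintype, Finsupp.finsetSum_apply]

theorem linearCombination_permExponent_some (m : Perm ι →₀ ℕ) (i j : ι) :
    Finsupp.linearCombination ℕ permExponent m (some (i, j)) = ∑ σ with σ i = j, m σ := by
  simp [linearCombination_permExponent_apply, permExponent_some, Finset.sum_filter]

theorem exists_permExponent_mul_swap_eq (hι : 2 < Fintype.card ι) (c : Option (ι × ι)) :
    ∃ x y : ι, x ≠ y ∧ ∀ σ : Perm ι, permExponent (σ * swap x y) c = permExponent σ c := by
  cases c with
  | none =>
    obtain ⟨x, y, hxy⟩ := Fintype.one_lt_card_iff.1 (one_lt_two.trans hι)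
    exact ⟨x, y, hxy, fun σ => by simp only [permExponent_none]⟩
  | some ij =>
    obtain ⟨i, j⟩ := ij
    have hcard : 1 < (Finset.univ.erase i).card := by
      rw [Finset.card_erase_of_mem (Finset.mem_univ i), Finset.card_univ]
      lia
    obtain ⟨x, hx, y, hy, hxy⟩ := Finset.one_lt_card.1 hcard
    refine ⟨x, y, hxy, fun σ => ?_⟩
    simp only [permExponent_some, mul_apply,
      swap_apply_of_ne_of_ne (Finset.ne_of_mem_erase hx).symm (Finset.ne_of_mem_erase hy).symm]

/-- The exponent vector of the squarefree monomial `∏ x_σ` over all permutations `σ` of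
sign `ε`. -/
noncomputable def signExponent (ι : Type*) [Fintype ι] [DecidableEq ι] (ε : ℤˣ) : Perm ι →₀ ℕ :=
  Finsupp.equivFunOnFinite.symm fun σ => if sign σ = ε then 1 else 0

theorem signExponent_apply (ε : ℤˣ) (σ : Perm ι) :
    signExponent ι ε σ = if sign σ = ε then 1 else 0 :=
  rfl

theorem signExponent_mul_swap (ε : ℤˣ) (σ : Perm ι) {x y : ι} (hxy : x ≠ y) :
    signExponent ι (-ε) (σ * swap x y) = signExponent ι ε σ := by
  simp only [signExponent_apply, Perm.sign_mul, sign_swap hxy, mul_neg, mul_one, neg_inj]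

theorem signExponent_one_ne_neg_one : signExponent ι 1 ≠ signExponent ι (-1) := by
  intro h
  simpa [signExponent_apply] using DFunLike.congr_fun h 1

theorem linearCombination_permExponent_signExponent_neg (hι : 2 < Fintype.card ι) (ε : ℤˣ) :
    Finsupp.linearCombination ℕ permExponent (signExponent ι ε) =
      Finsupp.linearCombination ℕ permExponent (signExponent ι (-ε)) := by
  ext c
  obtain ⟨x, y, hxy, hswap⟩ := exists_permExponent_mul_swap_eq hι c
  simp only [linearCombination_permExponent_apply]
  refine Fintype.sum_equiv (Equiv.mulRight (swap x y)) _ _ fun σ => ?_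
  rw [coe_mulRight, signExponent_mul_swap ε σ hxy, hswap]

end PermExponent

theorem ker_monomialMap_permExponent_ne_bot (R : Type*) [CommRing R] [Nontrivial R]
    {ι : Type*} [Fintype ι] (hι : 2 < Fintype.card ι) :
    RingHom.ker (monomialMap R (permExponent (ι := ι))) ≠ ⊥ := by
  classical
  exact ker_monomialMap_ne_bot signExponent_one_ne_neg_one
    (linearCombination_permExponent_signExponent_neg hι 1)

section PermFinThree

open Equiv Equiv.Perm

theorem exists_filter_perm_fin_three_eq_pair (σ : Perm (Fin 3)) {x y : Fin 3} (hxy : x ≠ y) :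
    ∃ i, ({τ | τ i = σ i} : Finset (Perm (Fin 3))) = {σ, σ * swap x y} := by
  decide +revert

theorem eq_sign_smul_of_forall_sum_filter_eq_zero {M : Type*} [AddCommGroup M]
    {d : Perm (Fin 3) → M} (hd : ∀ i j, ∑ σ with σ i = j, d σ = 0) (σ : Perm (Fin 3)) :
    d σ = sign σ • d 1 := by
  induction σ using swap_induction_on' with
  | one => simp
  | mul_swap σ x y hxy ih =>
    obtain ⟨i, hpair⟩ := exists_filter_perm_fin_three_eq_pair σ hxy
    have hne : σ ≠ σ * swap x y := by simpa [eq_comm] using hxy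
    have hsum : d σ + d (σ * swap x y) = 0 := by
      rw [← Finset.sum_pair hne, ← hpair, hd]
    rw [eq_neg_of_add_eq_zero_right hsum, ih, Perm.sign_mul, sign_swap hxy, mul_neg, mul_one,
      Units.neg_smul]

theorem six_le_degree_add_degree_of_linearCombination_permExponent_eq
    {m n : Perm (Fin 3) →₀ ℕ} (hne : m ≠ n)
    (h : Finsupp.linearCombination ℕ permExponent m =
      Finsupp.linearCombination ℕ permExponent n) :
    6 ≤ m.degree + n.degree := by
  let d (σ : Perm (Fin 3)) : ℤ := m σ - n σ
  have hd (i j : Fin 3) : ∑ σ with σ i = j, d σ = 0 := by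
    have hij := DFunLike.congr_fun h (some (i, j))
    simp only [linearCombination_permExponent_some] at hij
    rw [Finset.sum_sub_distrib, sub_eq_zero]
    exact_mod_cast hij
  have hsign (σ : Perm (Fin 3)) : d σ = sign σ • d 1 :=
    eq_sign_smul_of_forall_sum_filter_eq_zero hd σ
  have habs (σ : Perm (Fin 3)) : |d σ| = |d 1| := by
    rw [hsign, Units.smul_def, smul_eq_mul, abs_mul, Int.isUnit_iff_abs_eq.1 (sign σ).isUnit,
      one_mul]
  have hd_one : d 1 ≠ 0 := by
    contrapose! hne
    ext σ
    have hσ : (m σ : ℤ) - n σ = 0 := by rw [← abs_eq_zero, habs σ, hne, abs_zero]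
    lia
  have hbound : (6 : ℤ) ≤ m.degree + n.degree := calc
    (6 : ℤ) ≤ 6 * |d 1| := by linarith [Int.one_le_abs hd_one]
    _ = ∑ σ, |d σ| := by simp [habs, Fintype.card_perm, Nat.factorial]
    _ ≤ ∑ σ, ((m σ : ℤ) + n σ) := Finset.sum_le_sum fun σ _ => by grind
    _ = m.degree + n.degree := by
      simp only [Finsupp.degree_eq_sum, Finset.sum_add_distrib, Nat.cast_sum]
  exact_mod_cast hbound

theorem eq_zero_of_monomialMap_permExponent_eq_zero {R : Type*} [CommSemiring R]
    {f : MvPolynomial (Perm (Fin 3)) R} (hf : monomialMap R permExponent f = 0)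
    (hdeg : f.totalDegree ≤ 2) : f = 0 := by
  refine eq_zero_of_monomialMap_eq_zero (fun m hm n hn hmn => ?_) hf
  have hm_deg : m.degree ≤ 2 := (le_totalDegree hm).trans hdeg
  have hn_deg : n.degree ≤ 2 := (le_totalDegree hn).trans hdeg
  by_contra hne
  have hsix := six_le_degree_add_degree_of_linearCombination_permExponent_eq hne hmn
  lia

end PermFinThree

theorem stmt2_general (k : Type*) [CommRing k] [Nontrivial k]
    (φ : MvPolynomial (Equiv.Perm (Fin 3)) k →ₐ[k]
      MvPolynomial (Option (Fin 3 × Fin 3)) k)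
    (hφ : φ = MvPolynomial.aeval fun σ : Equiv.Perm (Fin 3) =>
      X none * ∏ i, X (some (i, σ i))) :
    RingHom.ker φ ≠ ⊥ ∧
    (∀ f ∈ RingHom.ker φ, f.totalDegree ≤ 2 → f = 0) ∧
    RingHom.ker φ ≠ Ideal.span {f | f ∈ RingHom.ker φ ∧ f.totalDegree ≤ 2} := by
  have hφ_eq : φ = monomialMap k permExponent := by
    simp only [hφ, monomialMap, monomial_permExponent]
  have hker : RingHom.ker φ ≠ ⊥ := by
    rw [hφ_eq]
    exact ker_monomialMap_permExponent_ne_bot k (by simp)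
  have hquad : ∀ f ∈ RingHom.ker φ, f.totalDegree ≤ 2 → f = 0 := by
    rw [hφ_eq]
    exact fun f hf => eq_zero_of_monomialMap_permExponent_eq_zero hf
  exact ⟨hker, hquad, ideal_ne_span_of_forall_eq_zero hker hquad⟩

/-- The toric ideal of the Birkhoff polytope `B₃` is nonzero, yet contains no nonzero
element of total degree at most `2`; in particular, it is not generated by its
elements of degree at most `2`. -/
theorem stmt2 (k : Type*) [Field k]
    (φ : MvPolynomial (Equiv.Perm (Fin 3)) k →ₐ[k]
      MvPolynomial (Option (Fin 3 × Fin 3)) k)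
    (hφ : φ = MvPolynomial.aeval fun σ : Equiv.Perm (Fin 3) =>
      X none * ∏ i, X (some (i, σ i))) :
    RingHom.ker φ ≠ ⊥ ∧
    (∀ f ∈ RingHom.ker φ, f.totalDegree ≤ 2 → f = 0) ∧
    RingHom.ker φ ≠ Ideal.span {f | f ∈ RingHom.ker φ ∧ f.totalDegree ≤ 2} :=
  stmt2_general k φ hφ
end

section
/- Let r ∈ ℝ^m and c ∈ ℝ^n be vectors of positive reals with Σ_i r_i = Σ_j c_j. Then the transportation polytope T_{rc} ⊂ ℝ^{m×n} has affine dimension exactly (m−1)(n−1); that is, the dimension (finrank) of the vector span of the set of differences of points of T_{rc} equals (m−1)(n−1). -/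
/-!
The table `r i * c j / ∑ r` is a point of the polytope with positive entries, so it can be moved
a little in every direction that preserves the row and column sums. The direction space of the
polytope is therefore the kernel of the linear map sending a matrix to its margins. A matrix with
zero margins is a zero-sum family of `m` zero-sum vectors of length `n`, and requiring a family of
vectors to sum to zero removes exactly one free vector, which gives the factors `m - 1` and `n - 1`.
-/

section ZeroSum

/-- The families in `M` indexed by a finite type whose members add up to zero. The values lie in a
module rather than in `R`, so that the construction can be iterated. -/
def zeroSum (R ι M : Type*) [Semiring R] [AddCommMonoid M] [Module R M] [Fintype ι] :
    Submodule R (ι → M) :=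
  LinearMap.ker (∑ i, LinearMap.proj i : (ι → M) →ₗ[R] M)

theorem mem_zeroSum {R ι M : Type*} [Semiring R] [AddCommMonoid M] [Module R M] [Fintype ι]
    {x : ι → M} : x ∈ zeroSum R ι M ↔ ∑ i, x i = 0 := by
  simp [zeroSum]

theorem finrank_zeroSum (K ι M : Type*) [DivisionRing K] [AddCommGroup M] [Module K M]
    [Module.Finite K M] [Fintype ι] :
    Module.finrank K (zeroSum K ι M) = (Fintype.card ι - 1) * Module.finrank K M := by
  classical
  rcases isEmpty_or_nonempty ι with _ | ⟨⟨i₀⟩⟩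
  · simp [Module.finrank_zero_of_subsingleton]
  let total : (ι → M) →ₗ[K] M := ∑ i, LinearMap.proj i
  have total_surjective : Function.Surjective total := fun x =>
    ⟨Pi.single i₀ x, by simp [total]⟩
  have rank_nullity : Module.finrank K M + Module.finrank K (zeroSum K ι M) =
      Fintype.card ι * Module.finrank K M := by
    have h := total.finrank_range_add_finrank_ker
    rwa [LinearMap.range_eq_top.2 total_surjective, finrank_top, Module.finrank_pi_fintype,
      Finset.sum_const, Finset.card_univ, smul_eq_mul] at h
  rw [Nat.sub_mul, one_mul, ← rank_nullity, Nat.add_sub_cancel_left]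

end ZeroSum

section Margins

/-- The linear map sending a matrix to its vector of row sums and its vector of column sums. -/
def margins (R ι κ : Type*) [Semiring R] [Fintype ι] [Fintype κ] :
    Matrix ι κ R →ₗ[R] (ι → R) × (κ → R) where
  toFun A := (fun i => ∑ j, A i j, fun j => ∑ i, A i j)
  map_add' A B := by ext <;> simp [Finset.sum_add_distrib]
  map_smul' t A := by ext <;> simp [Finset.mul_sum]

variable {R ι κ : Type*} [Semiring R] [Fintype ι] [Fintype κ]

theorem margins_eq_iff {A : Matrix ι κ R} {r : ι → R} {c : κ → R} :
    margins R ι κ A = (r, c) ↔ (∀ i, ∑ j, A i j = r i) ∧ ∀ j, ∑ i, A i j = c j := by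
  simp [margins, funext_iff]

theorem mem_ker_margins {A : Matrix ι κ R} :
    A ∈ LinearMap.ker (margins R ι κ) ↔ (∀ i, ∑ j, A i j = 0) ∧ ∀ j, ∑ i, A i j = 0 :=
  margins_eq_iff

/-- A matrix with zero margins, viewed as the family of its rows: these are zero-sum vectors which
themselves add up to zero. -/
def kerMarginsEquivZeroSum (R ι κ : Type*) [Semiring R] [Fintype ι] [Fintype κ] :
    LinearMap.ker (margins R ι κ) ≃ₗ[R] zeroSum R ι (zeroSum R κ R) where
  toFun A := ⟨fun i => ⟨A.1.row i, mem_zeroSum.2 ((mem_ker_margins.1 A.2).1 i)⟩,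
    mem_zeroSum.2 <| by ext j; simpa using (mem_ker_margins.1 A.2).2 j⟩
  invFun x := ⟨Matrix.of fun i j => (x.1 i).1 j, mem_ker_margins.2
    ⟨fun i => mem_zeroSum.1 (x.1 i).2, fun j => by
      simpa using congrArg (fun y => y.1 j) (mem_zeroSum.1 x.2)⟩⟩
  map_add' _ _ := rfl
  map_smul' _ _ := rfl
  left_inv _ := rfl
  right_inv _ := rfl

theorem finrank_ker_margins (K ι κ : Type*) [DivisionRing K] [Fintype ι] [Fintype κ] :
    Module.finrank K (LinearMap.ker (margins K ι κ)) =
      (Fintype.card ι - 1) * (Fintype.card κ - 1) := by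
  rw [(kerMarginsEquivZeroSum K ι κ).finrank_eq, finrank_zeroSum, finrank_zeroSum,
    Module.finrank_self, mul_one]

end Margins

section IndependenceTable

/-- The table `r i * c j / ∑ r`, in which rows and columns are independent in the sense of
statistics. It is the point of the transportation polytope around which we perturb. -/
def independenceTable {K ι κ : Type*} [Field K] [Fintype ι] (r : ι → K) (c : κ → K) :
    Matrix ι κ K :=
  Matrix.of fun i j => r i * c j / ∑ i, r i

variable {K ι κ : Type*} [Field K] [LinearOrder K] [IsStrictOrderedRing K] [Fintype ι]
  {r : ι → K} {c : κ → K}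

theorem independenceTable_pos (hr : ∀ i, 0 < r i) (hc : ∀ j, 0 < c j) (i : ι) (j : κ) :
    0 < independenceTable r c i j :=
  div_pos (mul_pos (hr i) (hc j)) (Finset.sum_pos (fun i _ => hr i) ⟨i, Finset.mem_univ i⟩)

theorem margins_independenceTable [Fintype κ] (hr : ∀ i, 0 < r i) (hc : ∀ j, 0 < c j)
    (hs : ∑ i, r i = ∑ j, c j) : margins K ι κ (independenceTable r c) = (r, c) := by
  refine margins_eq_iff.2 ⟨fun i => ?_, fun j => ?_⟩
  · have sum_pos : 0 < ∑ i, r i := Finset.sum_pos (fun i _ => hr i) ⟨i, Finset.mem_univ i⟩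
    calc ∑ j, r i * c j / ∑ i, r i = r i * (∑ j, c j) / ∑ i, r i := by
          rw [Finset.mul_sum, Finset.sum_div]
      _ = r i := by rw [← hs, mul_div_cancel_right₀ _ sum_pos.ne']
  · have sum_pos : 0 < ∑ i, r i :=
      hs ▸ Finset.sum_pos (fun j _ => hc j) ⟨j, Finset.mem_univ j⟩
    calc ∑ i, r i * c j / ∑ i, r i = (∑ i, r i) * c j / ∑ i, r i := by
          rw [Finset.sum_mul, Finset.sum_div]
      _ = c j := mul_div_cancel_left₀ _ sum_pos.ne'

end IndependenceTable

theorem vectorSpan_eq_ker_of_exists_add_smul_mem {K V W : Type*} [DivisionRing K]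
    [AddCommGroup V] [Module K V] [AddCommGroup W] [Module K W] (f : V →ₗ[K] W)
    {s : Set V} {b : W} (hf : ∀ x ∈ s, f x = b)
    {x₀ : V} (hx₀ : x₀ ∈ s) (hmove : ∀ v ∈ LinearMap.ker f, ∃ t : K, t ≠ 0 ∧ x₀ + t • v ∈ s) :
    vectorSpan K s = LinearMap.ker f := by
  apply le_antisymm
  · rw [vectorSpan_def, Submodule.span_le]
    rintro _ ⟨x, hx, y, hy, rfl⟩
    simp [hf x hx, hf y hy]
  · intro v hv
    obtain ⟨t, ht, hmem⟩ := hmove v hv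
    have smul_mem : t • v ∈ vectorSpan K s := by
      simpa using vsub_mem_vectorSpan K hmem hx₀
    exact (Submodule.smul_mem_iff _ ht).1 smul_mem

theorem exists_pos_forall_nonneg_add_mul {K ι : Type*} [Field K] [LinearOrder K]
    [IsStrictOrderedRing K] [Finite ι] {a : ι → K} (ha : ∀ i, 0 < a i) (b : ι → K) :
    ∃ t : K, 0 < t ∧ ∀ i, 0 ≤ a i + t * b i := by
  have eventually_bound : ∀ᶠ M : K in Filter.atTop, ∀ i, -b i / a i ≤ M :=
    Filter.eventually_all.2 fun i => Filter.eventually_ge_atTop _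
  obtain ⟨M, hM, hM_pos⟩ := (eventually_bound.and (Filter.eventually_gt_atTop 0)).exists
  refine ⟨M⁻¹, inv_pos.2 hM_pos, fun i => ?_⟩
  have nonneg : 0 ≤ M * a i + b i := by linarith [(div_le_iff₀ (ha i)).1 (hM i)]
  calc 0 ≤ M⁻¹ * (M * a i + b i) := mul_nonneg (inv_pos.2 hM_pos).le nonneg
    _ = a i + M⁻¹ * b i := by rw [mul_add, inv_mul_cancel_left₀ hM_pos.ne']

section TransportationPolytope

/-- The transportation polytope `T_{rc}`: the nonnegative matrices with row sums `r` and column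
sums `c`, over any ordered scalars and with rows and columns indexed by any finite types. -/
def transportationPolytope {R ι κ : Type*} [Semiring R] [LE R] [Fintype ι] [Fintype κ]
    (r : ι → R) (c : κ → R) : Set (Matrix ι κ R) :=
  {A | (∀ i j, 0 ≤ A i j) ∧ (∀ i, ∑ j, A i j = r i) ∧ (∀ j, ∑ i, A i j = c j)}

theorem mem_transportationPolytope {R ι κ : Type*} [Semiring R] [LE R] [Fintype ι] [Fintype κ]
    {r : ι → R} {c : κ → R} {A : Matrix ι κ R} :
    A ∈ transportationPolytope r c ↔ (∀ i j, 0 ≤ A i j) ∧ margins R ι κ A = (r, c) :=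
  and_congr_right' margins_eq_iff.symm

variable {K ι κ : Type*} [Field K] [LinearOrder K] [IsStrictOrderedRing K] [Fintype ι] [Fintype κ]
  {r : ι → K} {c : κ → K}

theorem vectorSpan_transportationPolytope (hr : ∀ i, 0 < r i) (hc : ∀ j, 0 < c j)
    (hs : ∑ i, r i = ∑ j, c j) :
    vectorSpan K (transportationPolytope r c) = LinearMap.ker (margins K ι κ) := by
  have table_margins := margins_independenceTable hr hc hs
  refine vectorSpan_eq_ker_of_exists_add_smul_mem (margins K ι κ) (x₀ := independenceTable r c)
    (fun A hA => (mem_transportationPolytope.1 hA).2)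
    (mem_transportationPolytope.2 ⟨fun i j => (independenceTable_pos hr hc i j).le, table_margins⟩)
    fun B hB => ?_
  obtain ⟨t, ht, nonneg⟩ := exists_pos_forall_nonneg_add_mul
    (fun p : ι × κ => independenceTable_pos hr hc p.1 p.2) (fun p => B p.1 p.2)
  refine ⟨t, ht.ne', mem_transportationPolytope.2 ⟨fun i j => nonneg (i, j), ?_⟩⟩
  rw [map_add, map_smul, LinearMap.mem_ker.1 hB, smul_zero, add_zero, table_margins]

theorem stmt5_general (hr : ∀ i, 0 < r i) (hc : ∀ j, 0 < c j) (hs : ∑ i, r i = ∑ j, c j) :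
    Module.finrank K (vectorSpan K (transportationPolytope r c)) =
      (Fintype.card ι - 1) * (Fintype.card κ - 1) := by
  rw [vectorSpan_transportationPolytope hr hc hs, finrank_ker_margins]

end TransportationPolytope

/-- The transportation polytope `T_{rc} ⊂ ℝ^{m×n}` for positive real marginals with
equal sums has affine dimension exactly `(m-1)(n-1)`. -/
theorem stmt5 (m n : ℕ) (r : Fin m → ℝ) (c : Fin n → ℝ)
    (hr : ∀ i, 0 < r i) (hc : ∀ j, 0 < c j) (hs : ∑ i, r i = ∑ j, c j)
    (T : Set (Matrix (Fin m) (Fin n) ℝ))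
    (hT : T = {A | (∀ i j, 0 ≤ A i j) ∧ (∀ i, ∑ j, A i j = r i) ∧
      (∀ j, ∑ i, A i j = c j)}) :
    Module.finrank ℝ (vectorSpan ℝ T) = (m - 1) * (n - 1) := by
  obtain rfl : T = transportationPolytope r c := hT
  simpa only [Fintype.card_fin] using stmt5_general hr hc hs
end

section
/- Let r ∈ ℝ^m and c ∈ ℝ^n be vectors of positive reals with Σ_i r_i = Σ_j c_j, and let A ∈ T_{rc}. If A has at least (m−1)(n−1)+1 zero entries, then there exist nonempty proper subsets I ⊊ {1,…,m} and J ⊊ {1,…,n} such that Σ_{i ∈ I} r_i = Σ_{j ∈ J} c_j and A_{ij} = 0 whenever (i,j) ∈ I × Jᶜ or (i,j) ∈ Iᶜ × J. -/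
/-!
View the nonzero entries of `A` as the edges of a bipartite graph between rows and columns.
A connected graph on `m + n` vertices has at least `m + n - 1` edges, while
`(m - 1) * (n - 1) + 1` zeros leave at most `m + n - 2` of them. So the graph has two distinct
connected components; no row or column vanishes, so each component contains both a row and a
column. The rows `I` and columns `J` of one component are the required sets: `∑ i ∈ I, r i` and
`∑ j ∈ J, c j` both equal the total mass of the block `I × J`.
-/

variable {ι κ R : Type*}

theorem sum_row_sums_eq_sum_col_sums [Fintype ι] [Fintype κ] [AddCommMonoid R]
    (A : Matrix ι κ R) {I : Finset ι} {J : Finset κ}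
    (hIJ : ∀ i j, A i j ≠ 0 → (i ∈ I ↔ j ∈ J)) :
    ∑ i ∈ I, ∑ j, A i j = ∑ j ∈ J, ∑ i, A i j := by
  have row_sum (i : ι) (hi : i ∈ I) : ∑ j, A i j = ∑ j ∈ J, A i j :=
    (Finset.sum_subset J.subset_univ fun j _ hj =>
      by_contra fun hij => hj ((hIJ i j hij).1 hi)).symm
  have col_sum (j : κ) (hj : j ∈ J) : ∑ i ∈ I, A i j = ∑ i, A i j :=
    Finset.sum_subset I.subset_univ fun i _ hi =>
      by_contra fun hij => hi ((hIJ i j hij).2 hj)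
  calc ∑ i ∈ I, ∑ j, A i j = ∑ i ∈ I, ∑ j ∈ J, A i j := Finset.sum_congr rfl row_sum
    _ = ∑ j ∈ J, ∑ i ∈ I, A i j := Finset.sum_comm
    _ = ∑ j ∈ J, ∑ i, A i j := Finset.sum_congr rfl col_sum

theorem filter_eq_nonempty_and_ne_univ_of_surjective {α β : Type*} [Fintype α] [DecidableEq β]
    {f : α → β} (hf : Function.Surjective f) {b b' : β} (hb : b ≠ b') :
    (Finset.univ.filter (f · = b)).Nonempty ∧ Finset.univ.filter (f · = b) ≠ Finset.univ := by
  obtain ⟨a, rfl⟩ := hf b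
  obtain ⟨a', rfl⟩ := hf b'
  refine ⟨⟨a, by simp⟩, fun h => hb ?_⟩
  simpa [eq_comm] using Finset.ext_iff.1 h a'

section SupportGraph

variable [Zero R]

/-- The bipartite graph of the support of a matrix: its vertices are the rows (`Sum.inl`) and the
columns (`Sum.inr`), and row `i` is joined to column `j` when `A i j ≠ 0`. -/
def supportGraph (A : Matrix ι κ R) : SimpleGraph (ι ⊕ κ) where
  Adj
    | .inl i, .inr j => A i j ≠ 0
    | .inr j, .inl i => A i j ≠ 0
    | _, _ => False
  symm := ⟨by rintro (i | j) (i' | j') h <;> exact h⟩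
  loopless := ⟨by rintro (i | j) h <;> exact h⟩

theorem supportGraph_adj_inl_inr {A : Matrix ι κ R} {i : ι} {j : κ} :
    (supportGraph A).Adj (.inl i) (.inr j) ↔ A i j ≠ 0 :=
  Iff.rfl

theorem edgeSet_supportGraph (A : Matrix ι κ R) :
    (supportGraph A).edgeSet =
      (fun p : ι × κ => s(Sum.inl p.1, Sum.inr p.2)) '' {p | A p.1 p.2 ≠ 0} := by
  ext e
  induction e using Sym2.ind with
  | _ x y => rcases x with i | j <;> rcases y with i' | j' <;> simp [supportGraph]

theorem ncard_edgeSet_supportGraph [Fintype ι] [Fintype κ] [DecidableEq R] (A : Matrix ι κ R) :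
    (supportGraph A).edgeSet.ncard =
      (Finset.univ.filter fun p : ι × κ => A p.1 p.2 ≠ 0).card := by
  have edge_injective :
      Function.Injective fun p : ι × κ => (s(.inl p.1, .inr p.2) : Sym2 (ι ⊕ κ)) := by
    rintro ⟨i, j⟩ ⟨i', j'⟩ h
    simpa using h
  rw [edgeSet_supportGraph, Set.ncard_image_of_injective _ edge_injective,
    Set.ncard_eq_toFinset_card', Set.toFinset_ofPred]

theorem not_connected_supportGraph_of_lt_card_zeros
    [Fintype ι] [Fintype κ] [DecidableEq R] {A : Matrix ι κ R}
    (hz : (Fintype.card ι - 1) * (Fintype.card κ - 1) <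
      (Finset.univ.filter fun p : ι × κ => A p.1 p.2 = 0).card) :
    ¬ (supportGraph A).Connected := by
  intro hconn
  have vertices_le : Fintype.card ι + Fintype.card κ ≤
      (Finset.univ.filter fun p : ι × κ => A p.1 p.2 ≠ 0).card + 1 := by
    simpa [ncard_edgeSet_supportGraph] using hconn.card_vert_le_card_edgeSet_add_one
  have entries := Finset.card_filter_add_card_filter_not (s := Finset.univ)
    (fun p : ι × κ => A p.1 p.2 = 0)
  rw [Finset.card_univ, Fintype.card_prod] at entries
  obtain ⟨⟨i, j⟩, -⟩ := Finset.card_pos.1 (Nat.zero_lt_of_lt hz)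
  obtain ⟨a, ha⟩ := Nat.exists_eq_add_one.2 (Fintype.card_pos_iff.2 ⟨i⟩)
  obtain ⟨b, hb⟩ := Nat.exists_eq_add_one.2 (Fintype.card_pos_iff.2 ⟨j⟩)
  simp only [ha, hb, Nat.add_sub_cancel] at hz vertices_le entries
  linarith

theorem nontrivial_connectedComponent_supportGraph_of_lt_card_zeros
    [Fintype ι] [Fintype κ] [DecidableEq R] {A : Matrix ι κ R}
    (hz : (Fintype.card ι - 1) * (Fintype.card κ - 1) <
      (Finset.univ.filter fun p : ι × κ => A p.1 p.2 = 0).card) :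
    Nontrivial (supportGraph A).ConnectedComponent := by
  obtain ⟨⟨i, -⟩, -⟩ := Finset.card_pos.1 (Nat.zero_lt_of_lt hz)
  have : Nonempty (ι ⊕ κ) := ⟨.inl i⟩
  rw [← not_subsingleton_iff_nontrivial]
  intro hsub
  exact not_connected_supportGraph_of_lt_card_zeros hz
    ⟨fun _ _ => SimpleGraph.ConnectedComponent.exact (hsub.elim _ _)⟩

theorem supportGraph_connectedComponentMk_inl_eq_inr {A : Matrix ι κ R} {i : ι} {j : κ}
    (hij : A i j ≠ 0) :
    (supportGraph A).connectedComponentMk (.inl i) =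
      (supportGraph A).connectedComponentMk (.inr j) :=
  SimpleGraph.ConnectedComponent.connectedComponentMk_eq_of_adj
    (supportGraph_adj_inl_inr.2 hij)

theorem surjective_supportGraph_connectedComponentMk_inl {A : Matrix ι κ R}
    (hcol : ∀ j, ∃ i, A i j ≠ 0) :
    Function.Surjective fun i => (supportGraph A).connectedComponentMk (.inl i) := by
  intro C
  induction C using SimpleGraph.ConnectedComponent.ind with
  | _ v =>
    rcases v with i | j
    · exact ⟨i, rfl⟩
    · exact (hcol j).imp fun _ => supportGraph_connectedComponentMk_inl_eq_inr

theorem surjective_supportGraph_connectedComponentMk_inr {A : Matrix ι κ R}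
    (hrow : ∀ i, ∃ j, A i j ≠ 0) :
    Function.Surjective fun j => (supportGraph A).connectedComponentMk (.inr j) := by
  intro C
  induction C using SimpleGraph.ConnectedComponent.ind with
  | _ v =>
    rcases v with i | j
    · exact (hrow i).imp fun _ hij => (supportGraph_connectedComponentMk_inl_eq_inr hij).symm
    · exact ⟨j, rfl⟩

end SupportGraph

theorem stmt9_general [Fintype ι] [Fintype κ] [AddCommMonoid R] [DecidableEq R]
    (A : Matrix ι κ R) (hrow : ∀ i, ∃ j, A i j ≠ 0) (hcol : ∀ j, ∃ i, A i j ≠ 0)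
    (hz : (Fintype.card ι - 1) * (Fintype.card κ - 1) + 1 ≤
      (Finset.univ.filter fun p : ι × κ => A p.1 p.2 = 0).card) :
    ∃ (I : Finset ι) (J : Finset κ),
      I.Nonempty ∧ I ≠ Finset.univ ∧ J.Nonempty ∧ J ≠ Finset.univ ∧
      (∑ i ∈ I, ∑ j, A i j) = (∑ j ∈ J, ∑ i, A i j) ∧
      (∀ i j, (i ∈ I ∧ j ∉ J) ∨ (i ∉ I ∧ j ∈ J) → A i j = 0) := by
  classical
  have := nontrivial_connectedComponent_supportGraph_of_lt_card_zeros hz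
  obtain ⟨C, C', hCC'⟩ := exists_pair_ne (supportGraph A).ConnectedComponent
  obtain ⟨hI, hI'⟩ := filter_eq_nonempty_and_ne_univ_of_surjective
    (surjective_supportGraph_connectedComponentMk_inl hcol) hCC'
  obtain ⟨hJ, hJ'⟩ := filter_eq_nonempty_and_ne_univ_of_surjective
    (surjective_supportGraph_connectedComponentMk_inr hrow) hCC'
  have hIJ (i : ι) (j : κ) (hij : A i j ≠ 0) :
      i ∈ Finset.univ.filter (fun i => (supportGraph A).connectedComponentMk (.inl i) = C) ↔
        j ∈ Finset.univ.filter (fun j => (supportGraph A).connectedComponentMk (.inr j) = C) := by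
    simp [supportGraph_connectedComponentMk_inl_eq_inr hij]
  refine ⟨_, _, hI, hI', hJ, hJ', sum_row_sums_eq_sum_col_sums A hIJ, fun i j h => ?_⟩
  by_contra hij
  have hmem := hIJ i j hij
  tauto

/-- If a point `A` of the transportation polytope `T_{rc}` has at least
`(m-1)(n-1)+1` zero entries, then there are nonempty proper index sets `I`, `J`
with `∑_{i ∈ I} r_i = ∑_{j ∈ J} c_j` and `A` vanishing on `I × Jᶜ` and `Iᶜ × J`. -/
theorem stmt9 (m n : ℕ) (r : Fin m → ℝ) (c : Fin n → ℝ)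
    (hr : ∀ i, 0 < r i) (hc : ∀ j, 0 < c j) (hs : ∑ i, r i = ∑ j, c j)
    (A : Matrix (Fin m) (Fin n) ℝ)
    (hA0 : ∀ i j, 0 ≤ A i j) (hAr : ∀ i, ∑ j, A i j = r i)
    (hAc : ∀ j, ∑ i, A i j = c j)
    (hz : (m - 1) * (n - 1) + 1 ≤
      (Finset.univ.filter fun p : Fin m × Fin n => A p.1 p.2 = 0).card) :
    ∃ (I : Finset (Fin m)) (J : Finset (Fin n)),
      I.Nonempty ∧ I ≠ Finset.univ ∧ J.Nonempty ∧ J ≠ Finset.univ ∧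
      (∑ i ∈ I, r i) = (∑ j ∈ J, c j) ∧
      (∀ i j, (i ∈ I ∧ j ∉ J) ∨ (i ∉ I ∧ j ∈ J) → A i j = 0) := by
  obtain rfl : (fun i => ∑ j, A i j) = r := funext hAr
  obtain rfl : (fun j => ∑ i, A i j) = c := funext hAc
  have hrow (i : Fin m) : ∃ j, A i j ≠ 0 := by
    simpa using Finset.exists_ne_zero_of_sum_ne_zero (hr i).ne'
  have hcol (j : Fin n) : ∃ i, A i j ≠ 0 := by
    simpa using Finset.exists_ne_zero_of_sum_ne_zero (hc j).ne'
  exact stmt9_general A hrow hcol (by simpa only [Fintype.card_fin] using hz)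
end
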